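/- arXiv:1312.5942 — 2 statements merged into one kernel-verified Lean document; each statement's English description precedes it below -/
import Mathlib

section
/- Let (μ_n) be a sequence in 𝓜 converging weakly to μ ∈ 𝓜 with lim_{n→∞} ∫ log η dμ_n = ∫ log η dμ > −∞. If μ gives zero mass to the boundaries of the atoms of 𝒫, then limsup_{n→∞} h_{μ_n}(f,𝒫) ≤ h_μ(f,𝒫). -/
open MeasureTheory Filter Metric Set
open scoped ENNReal NNReal Topology

noncomputable section

variable {X : Type*} [MetricSpace X] [CompactSpace X] [MeasurableSpace X] [BorelSpace X]

/-- `Ω = X \ ⋃_{i ≥ 0} f^{-i}(I)`: the set of points whose whole forward orbit avoids `I`. -/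
def dynOmega (f : X → X) (I : Set X) : Set X := {x | ∀ n : ℕ, f^[n] x ∉ I}

/-- `μ ∈ 𝓜`: a Borel probability measure with `μ(I) = 0` which is invariant, `f_* μ = μ`. -/
def MemM (f : X → X) (I : Set X) (μ : Measure X) : Prop :=
  IsProbabilityMeasure μ ∧ μ I = 0 ∧ Measure.map f μ = μ

/-- A countable Borel partition of a set `S`, indexed by `ℕ` (empty atoms are allowed). -/
def IsCountablePartition (S : Set X) (P : ℕ → Set X) : Prop :=
  (∀ i, MeasurableSet (P i)) ∧ (Pairwise fun i j => Disjoint (P i) (P j)) ∧ (⋃ i, P i) = S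

/-- The entropy `H_ν(P) = ∑_{P ∈ 𝒫} - ν(P) log ν(P)` of a countable partition,
with values in `ℝ≥0∞`. -/
def partEntropy {ι : Type*} (ν : Measure X) (P : ι → Set X) : ℝ≥0∞ :=
  ∑' i, ENNReal.ofReal (Real.negMulLog (ν (P i)).toReal)

/-- The atoms of the refined partition `⋁_{i=0}^{q-1} f^{-i} 𝒫`. -/
def refinedAtoms (f : X → X) (P : ℕ → Set X) (q : ℕ) : (Fin q → ℕ) → Set X :=
  fun s => ⋂ i : Fin q, f^[(i : ℕ)] ⁻¹' P (s i)

/-- `V_n = {x : e^{-(n+1)} < η x ≤ e^{-n}}`. -/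
def Vset (η : X → ℝ) (n : ℕ) : Set X :=
  {x | Real.exp (-(n + 1 : ℝ)) < η x ∧ η x ≤ Real.exp (-(n : ℝ))}

/-- The Mané partition `𝒫` associated to `η` on a manifold of complex dimension `k`:
a countable Borel partition of `{η ≠ 0}` such that every nonempty atom is contained in
some `V_n` and has diameter `< r_n = e^{-(n+1)}`, and such that the number of atoms
contained in `V_n` is at most `C (1/r_n)^{2k} = C e^{2k(n+1)}` for a constant `C > 0`. -/
def IsManePartition (k : ℕ) (η : X → ℝ) (P : ℕ → Set X) : Prop :=
  IsCountablePartition {x | η x ≠ 0} P ∧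
  (∀ i, (P i).Nonempty → ∃ n : ℕ, P i ⊆ Vset η n ∧
      Metric.diam (P i) < Real.exp (-(n + 1 : ℝ))) ∧
  (∃ C > (0 : ℝ), ∀ n : ℕ,
      {i | (P i).Nonempty ∧ P i ⊆ Vset η n}.Finite ∧
      (({i | (P i).Nonempty ∧ P i ⊆ Vset η n}.ncard : ℝ)
        ≤ C * Real.exp (2 * k * (n + 1 : ℝ))))

/-- `h_ν(f, 𝒫) = inf_{q ≥ 1} (1/q) H_ν(⋁_{i=0}^{q-1} f^{-i} 𝒫)`. -/
def dynEntropy (f : X → X) (ν : Measure X) (P : ℕ → Set X) : ℝ≥0∞ :=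
  ⨅ q : ℕ, partEntropy ν (refinedAtoms f P (q + 1)) / (q + 1)

/-- Cancellation for `limsup` and `liminf`. -/
theorem limsup_le_of_add_aux (K R B : ℕ → ℝ≥0∞) (K0 R0 B0 : ℝ≥0∞)
    (h : ∀ n, K n + R n = B n) (h0 : K0 + R0 = B0) (hB : limsup B atTop ≤ B0)
    (hR : R0 ≤ liminf R atTop) (hfin : R0 ≠ ∞) : limsup K atTop ≤ K0 := by
  have h3 : limsup K atTop + R0 ≤ K0 + R0 := by
    rw [h0]
    refine le_trans ?_ hB
    refine ENNReal.le_of_forall_pos_le_add fun ε hε _ => ?_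
    have hε' : (0 : ℝ≥0∞) < ε := by exact_mod_cast hε
    have hev : ∀ᶠ n in atTop, R0 ≤ R n + ε := by
      by_cases hR0 : R0 = 0
      · simp [hR0]
      · have hlt : R0 - ε < liminf R atTop :=
          lt_of_lt_of_le (ENNReal.sub_lt_self hfin hR0 hε'.ne') hR
        filter_upwards [eventually_lt_of_lt_liminf hlt] with n hn
        exact tsub_le_iff_right.1 hn.le
    rw [← limsup_add_const atTop K R0 (by isBoundedDefault) (by isBoundedDefault),
      ← limsup_add_const atTop B ε (by isBoundedDefault) (by isBoundedDefault)]
    refine limsup_le_limsup ?_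
    filter_upwards [hev] with n hn
    rw [← h n, add_assoc]
    gcongr
  exact (ENNReal.add_le_add_iff_right hfin).1 h3

/-- Fatou type inequality for lower semicontinuous functions. -/
theorem lintegral_le_liminf_lsc_aux
    {μ : Measure X} {μs : ℕ → Measure X} {h : X → ℝ} (h_nn : 0 ≤ h) (hm : Measurable h)
    (hopen : ∀ t, 0 < t → IsOpen {x | t < h x})
    (h_opens : ∀ G, IsOpen G → μ G ≤ atTop.liminf (fun i ↦ μs i G)) :
    ∫⁻ x, ENNReal.ofReal (h x) ∂μ ≤ atTop.liminf (fun i ↦ ∫⁻ x, ENNReal.ofReal (h x) ∂(μs i)) := by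
  simp_rw [lintegral_eq_lintegral_meas_lt _ (Eventually.of_forall h_nn) hm.aemeasurable]
  calc ∫⁻ (t : ℝ) in Set.Ioi 0, μ {a | t < h a}
      ≤ ∫⁻ (t : ℝ) in Set.Ioi 0, atTop.liminf (fun i ↦ (μs i) {a | t < h a}) := by
        refine setLIntegral_mono' measurableSet_Ioi ?_
        intro t ht
        exact h_opens _ (hopen t ht)
    _ ≤ atTop.liminf (fun i ↦ ∫⁻ (t : ℝ) in Set.Ioi 0, (μs i) {a | t < h a}) :=
        lintegral_liminf_le (fun n ↦ Antitone.measurable (fun s t hst ↦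
            measure_mono (fun ω hω ↦ lt_of_le_of_lt hst hω)))

/-- Fatou for sums. -/
theorem tsum_le_liminf_aux {ι : Type*} (d : ℕ → ι → ℝ≥0∞) (d0 : ι → ℝ≥0∞)
    (h : ∀ s, Tendsto (fun n => d n s) atTop (𝓝 (d0 s))) :
    ∑' s, d0 s ≤ liminf (fun n => ∑' s, d n s) atTop := by
  let _ : MeasurableSpace ι := ⊤
  have := lintegral_liminf_le (μ := Measure.count) (u := atTop) (f := d) (fun _ => measurable_from_top)
  simp only [lintegral_count] at this
  convert this using 3 with s
  exact (h s).liminf_eq.symm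

/-- Generalized dominated convergence (upper half) for sums. -/
theorem limsup_tsum_le_aux {ι : Type*} (φ g : ℕ → ι → ℝ≥0∞) (φ0 g0 : ι → ℝ≥0∞)
    (hφ : ∀ s, Tendsto (fun n => φ n s) atTop (𝓝 (φ0 s)))
    (hg : ∀ s, Tendsto (fun n => g n s) atTop (𝓝 (g0 s)))
    (hle : ∀ n s, φ n s ≤ g n s) 
    (hfin : ∑' s, g0 s ≠ ∞)
    (hsum : limsup (fun n => ∑' s, g n s) atTop ≤ ∑' s, g0 s) :
    limsup (fun n => ∑' s, φ n s) atTop ≤ ∑' s, φ0 s := by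
  have hle0 : ∀ s, φ0 s ≤ g0 s := fun s => le_of_tendsto_of_tendsto' (hφ s) (hg s) (fun n => hle n s)
  have hg0 : ∀ s, g0 s ≠ ∞ := fun s => ENNReal.ne_top_of_tsum_ne_top hfin s
  refine limsup_le_of_add_aux _ (fun n => ∑' s, (g n s - φ n s)) (fun n => ∑' s, g n s) _
    (∑' s, (g0 s - φ0 s)) (∑' s, g0 s) ?_ ?_ hsum ?_ ?_
  · intro n
    rw [← ENNReal.tsum_add]
    exact tsum_congr fun s => add_tsub_cancel_of_le (hle n s)
  · rw [← ENNReal.tsum_add]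
    exact tsum_congr fun s => add_tsub_cancel_of_le (hle0 s)
  · exact tsum_le_liminf_aux _ _ fun s => ENNReal.Tendsto.sub (hg s) (hφ s) (Or.inl (hg0 s))
  · exact ne_top_of_le_ne_top hfin (ENNReal.tsum_le_tsum fun s => tsub_le_self)

theorem tsum_pi_prod_aux (w : ℕ → ℝ≥0∞) (q : ℕ) :
    ∑' s : Fin q → ℕ, ∏ i, w (s i) = (∑' j, w j) ^ q := by
  induction q with
  | zero => simp
  | succ q ih =>
    rw [← (Fin.consEquiv (fun _ : Fin (q+1) => ℕ)).tsum_eq, ENNReal.tsum_prod']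
    simp only [Fin.consEquiv_apply, Fin.prod_univ_succ, Fin.cons_zero, Fin.cons_succ]
    simp_rw [ENNReal.tsum_mul_left]
    rw [ENNReal.tsum_mul_right, pow_succ', ih]

theorem negMulLog_le_aux (x L : ℝ) (hx : 0 ≤ x) :
    Real.negMulLog x ≤ L * x + Real.exp (-L) := by
  rcases hx.eq_or_lt with rfl | hx
  · simp [Real.exp_nonneg]
  · have h := Real.add_one_le_exp (-L - Real.log x)
    rw [Real.exp_sub, Real.exp_log hx, le_div_iff₀ hx] at h
    unfold Real.negMulLog
    nlinarith

/-- Existence of the weights. -/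
theorem exists_weights_aux (k : ℕ) (η : X → ℝ) (P : ℕ → Set X) (hP : IsManePartition k η P) :
    ∃ (a : ℝ) (l : ℕ → ℝ≥0), 0 < a ∧ (∑' j, ENNReal.ofReal (Real.exp (-(l j : ℝ)))) ≠ ∞ ∧
      ∀ j x, x ∈ P j → (l j : ℝ) ≤ a * (1 - Real.log (η x)) := by
  classical
  obtain ⟨⟨hPm, hPd, hPu⟩, hne, C, hC, hcard⟩ := hP
  choose! N hN using hne
  refine ⟨2 * k + 1, fun j => if (P j).Nonempty then (2 * k + 1) * (N j + 1) else j, by positivity,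
    ?_, ?_⟩
  · have hgeo : Summable fun n : ℕ => Real.exp (-(n : ℝ)) := Real.summable_exp_neg_nat
    have hgeo' : (∑' n : ℕ, ENNReal.ofReal (Real.exp (-(n : ℝ)))) ≠ ∞ := hgeo.tsum_ofReal_ne_top
    set e : ℕ → ℝ≥0∞ := fun n => ENNReal.ofReal (Real.exp (-((2 * k + 1) * (n + 1 : ℝ)))) with he
    have hb : ∀ j, ENNReal.ofReal (Real.exp (-(((if (P j).Nonempty then (2 * k + 1) * (N j + 1) else j : ℝ≥0) : ℝ≥0) : ℝ)))
        ≤ (∑' n, if ((P j).Nonempty ∧ P j ⊆ Vset η n) then e n else 0)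
          + ENNReal.ofReal (Real.exp (-(j : ℝ))) := by
      intro j
      by_cases h : (P j).Nonempty
      · refine le_add_right ?_
        refine le_trans ?_ (ENNReal.le_tsum (N j))
        rw [if_pos h, if_pos ⟨h, (hN j h).1⟩]
        simp [he]
      · rw [if_neg h]
        exact le_add_left (by simp)
    refine ne_top_of_le_ne_top ?_ (ENNReal.tsum_le_tsum hb)
    rw [ENNReal.tsum_add, ENNReal.tsum_comm]
    refine ENNReal.add_ne_top.2 ⟨?_, hgeo'⟩
    have hc : ∀ n, (∑' j, if ((P j).Nonempty ∧ P j ⊆ Vset η n) then e n else 0)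
        ≤ ENNReal.ofReal C * ENNReal.ofReal (Real.exp (-(n : ℝ))) := by
      intro n
      obtain ⟨hfin, hcd⟩ := hcard n
      have h1 : (∑' j, if ((P j).Nonempty ∧ P j ⊆ Vset η n) then e n else 0)
          = ({i | (P i).Nonempty ∧ P i ⊆ Vset η n}.ncard : ℝ≥0∞) * e n := by
        rw [tsum_eq_sum (s := hfin.toFinset)]
        · rw [Finset.sum_congr rfl (g := fun _ => e n)]
          · rw [Finset.sum_const, nsmul_eq_mul, Set.ncard_eq_toFinset_card _ hfin]
          · intro j hj
            rw [if_pos]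
            simpa using hj
        · intro j hj
          rw [if_neg]
          simpa using hj
      rw [h1, he, ← ENNReal.ofReal_natCast, ← ENNReal.ofReal_mul (by positivity),
        ← ENNReal.ofReal_mul hC.le]
      apply ENNReal.ofReal_le_ofReal
      calc _ ≤ (C * Real.exp (2 * k * (n + 1 : ℝ))) * Real.exp (-((2 * k + 1) * (n + 1 : ℝ))) := by
            gcongr
        _ = C * Real.exp (-(n + 1 : ℝ)) := by
            rw [mul_assoc, ← Real.exp_add]; ring_nf
        _ ≤ _ := by
            gcongr; linarith
    refine ne_top_of_le_ne_top ?_ (ENNReal.tsum_le_tsum hc)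
    rw [ENNReal.tsum_mul_left]
    exact ENNReal.mul_ne_top ENNReal.ofReal_ne_top hgeo'
  · intro j x hx
    have h : (P j).Nonempty := ⟨x, hx⟩
    have hV := (hN j h).1 hx
    have hpos : 0 < η x := lt_trans (Real.exp_pos _) hV.1
    have hlog : Real.log (η x) ≤ -(N j : ℝ) := (Real.log_le_iff_le_exp hpos).2 hV.2
    simp only [if_pos h]
    push_cast
    gcongr
    linarith

/-- The index function of a partition. -/
theorem exists_idx_aux (P : ℕ → Set X) (hm : ∀ i, MeasurableSet (P i))
    (hd : Pairwise fun i j => Disjoint (P i) (P j)) :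
    ∃ idx : X → ℕ, Measurable idx ∧ ∀ j x, x ∈ P j → idx x = j := by
  classical
  have key : ∀ j x, x ∈ P j → (if h : ∃ i, x ∈ P i then h.choose else 0) = j := by
    intro j x hx
    have h : ∃ i, x ∈ P i := ⟨j, hx⟩
    rw [dif_pos h]
    by_contra hne
    exact Set.disjoint_left.1 (hd hne) h.choose_spec hx
  refine ⟨fun x => if h : ∃ i, x ∈ P i then h.choose else 0, ?_, key⟩
  refine measurable_to_countable' fun j => ?_
  by_cases hj : j = 0
  · have : (fun x => if h : ∃ i, x ∈ P i then h.choose else 0) ⁻¹' {j} = P j ∪ (⋃ i, P i)ᶜ := by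
      ext x
      simp only [mem_preimage, mem_singleton_iff, mem_union, mem_compl_iff, mem_iUnion]
      constructor
      · intro h
        by_cases hx : ∃ i, x ∈ P i
        · left
          obtain ⟨i, hi⟩ := hx
          have := key i x hi
          rw [h] at this
          exact this ▸ hi
        · right; exact hx
      · rintro (h | h)
        · exact key j x h
        · rw [dif_neg h, hj]
    rw [this]
    exact (hm j).union (MeasurableSet.iUnion hm).compl
  · have : (fun x => if h : ∃ i, x ∈ P i then h.choose else 0) ⁻¹' {j} = P j := by
      ext x
      simp only [mem_preimage, mem_singleton_iff]
      constructor
      · intro h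
        by_cases hx : ∃ i, x ∈ P i
        · obtain ⟨i, hi⟩ := hx
          have := key i x hi
          rw [h] at this
          exact this ▸ hi
        · rw [dif_neg hx] at h
          exact absurd h.symm hj
      · exact key j x
    rw [this]
    exact hm j

/-- Frontier of the preimages. -/
theorem frontier_aux (f : X → X) (I : Set X) (hI : IsClosed I) (hfc : ContinuousOn f Iᶜ)
    (P : ℕ → Set X) (q : ℕ) (s : Fin q → ℕ) :
    frontier (refinedAtoms f P q s) ⊆
      ⋃ i : ℕ, (f^[i] ⁻¹' I ∪ ⋃ j : ℕ, f^[i] ⁻¹' (frontier (P j))) := by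
  intro x hx
  by_contra hcon
  simp only [mem_iUnion, mem_union, mem_preimage, not_exists, not_or] at hcon
  have hcont : ∀ i, ContinuousAt f^[i] x := by
    intro i
    induction i with
    | zero => exact continuousAt_id
    | succ i ih =>
      rw [Function.iterate_succ']
      exact ContinuousAt.comp (hfc.continuousAt (hI.isOpen_compl.mem_nhds (hcon i).1)) ih
  by_cases hall : ∀ i : Fin q, f^[(i : ℕ)] x ∈ P (s i)
  · apply hx.2
    rw [mem_interior_iff_mem_nhds]
    refine (Filter.iInter_mem).2 fun i => hcont i ?_
    have := (hcon i).2 (s i)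
    rw [← mem_interior_iff_mem_nhds]
    by_contra h
    exact this ⟨subset_closure (hall i), h⟩
  · push Not at hall
    obtain ⟨i, hi⟩ := hall
    have h2 := (hcon i).2 (s i)
    have h3 : f^[(i : ℕ)] x ∉ closure (P (s i)) := by
      intro h
      exact h2 ⟨h, fun h' => hi (interior_subset h')⟩
    have h4 : f^[(i : ℕ)] ⁻¹' (closure (P (s i)))ᶜ ∈ 𝓝 x :=
      hcont i (isClosed_closure.isOpen_compl.mem_nhds h3)
    have h5 := mem_closure_iff_nhds.1 hx.1 _ h4
    obtain ⟨y, hy1, hy2⟩ := h5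
    exact hy1 (subset_closure (mem_iInter.1 hy2 i))

theorem measurePreserving_aux {f : X → X} {I : Set X} {μ : Measure X} (hf : Measurable f)
    (h : MemM f I μ) : MeasurePreserving f μ μ := ⟨hf, h.2.2⟩

theorem ae_orbit_aux {f : X → X} {μ : Measure X} (h : MeasurePreserving f μ μ) {Z : Set X}
    (hZm : MeasurableSet Z) (hZ : μ Z = 0) : ∀ᵐ x ∂μ, ∀ n : ℕ, f^[n] x ∉ Z := by
  rw [ae_all_iff]
  intro n
  rw [ae_iff]
  simp only [not_not]
  have := (h.iterate n).measure_preimage hZm.nullMeasurableSet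
  rw [hZ] at this
  exact this


theorem atoms_ae_aux {f : X → X} {I : Set X} {P : ℕ → Set X} {ν : Measure X} {idx : X → ℕ}
    (hidx : ∀ j x, x ∈ P j → idx x = j)
    (hae : ∀ᵐ x ∂ν, ∀ n : ℕ, f^[n] x ∈ ⋃ j, P j) (haeI : ∀ᵐ x ∂ν, ∀ n : ℕ, f^[n] x ∉ I)
    (q : ℕ) (s : Fin q → ℕ) :
    ν (refinedAtoms f (fun i => P i ∩ dynOmega f I) q s) = ν (refinedAtoms f P q s) ∧
    ν (refinedAtoms f (fun i => P i ∩ dynOmega f I) q s) =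
      ν ((fun x => fun i : Fin q => idx (f^[(i : ℕ)] x)) ⁻¹' {s}) := by
  constructor
  · apply measure_congr
    filter_upwards [haeI] with x hx
    apply propext
    change x ∈ refinedAtoms f (fun i => P i ∩ dynOmega f I) q s ↔ x ∈ refinedAtoms f P q s
    simp only [refinedAtoms, mem_iInter, mem_preimage, mem_inter_iff]
    constructor
    · exact fun h i => (h i).1
    · refine fun h i => ⟨h i, fun n => ?_⟩
      rw [← Function.iterate_add_apply]
      exact hx _
  · apply measure_congr
    filter_upwards [haeI, hae] with x hx hxP
    apply propext
    change x ∈ refinedAtoms f (fun i => P i ∩ dynOmega f I) q s ↔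
      (fun i : Fin q => idx (f^[(i : ℕ)] x)) = s
    simp only [refinedAtoms, mem_iInter, mem_preimage, mem_inter_iff]
    constructor
    · exact fun h => funext fun i => hidx _ _ (h i).1
    · intro h i
      obtain ⟨j, hj⟩ := mem_iUnion.1 (hxP i)
      have h1 := congrFun h i
      simp only [hidx _ _ hj] at h1
      refine ⟨h1 ▸ hj, fun n => ?_⟩
      rw [← Function.iterate_add_apply]
      exact hx _

theorem gsum_aux {f : X → X} {I : Set X} {P : ℕ → Set X} {ν : Measure X} {idx : X → ℕ}
    (hidxm : Measurable idx) (hpres : MeasurePreserving f ν ν)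
    (hidx : ∀ j x, x ∈ P j → idx x = j)
    (hae : ∀ᵐ x ∂ν, ∀ n : ℕ, f^[n] x ∈ ⋃ j, P j) (haeI : ∀ᵐ x ∂ν, ∀ n : ℕ, f^[n] x ∉ I)
    (q : ℕ) (l : ℕ → ℝ≥0) :
    ∑' s : Fin q → ℕ, ((∑ i, (l (s i) : ℝ≥0∞)) *
        ν (refinedAtoms f (fun i => P i ∩ dynOmega f I) q s)
        + ∏ i, ENNReal.ofReal (Real.exp (-(l (s i) : ℝ)))) =
      q * (∫⁻ x, l (idx x) ∂ν) + (∑' j, ENNReal.ofReal (Real.exp (-(l j : ℝ)))) ^ q := by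
  rw [ENNReal.tsum_add, tsum_pi_prod_aux (fun j => ENNReal.ofReal (Real.exp (-(l j : ℝ))))]
  congr 1
  have hitm : Measurable (fun x => fun i : Fin q => idx (f^[(i : ℕ)] x)) :=
    measurable_pi_lambda _ fun i => hidxm.comp (hpres.measurable.iterate i)
  calc _ = ∑' s : Fin q → ℕ, (∑ i, (l (s i) : ℝ≥0∞)) *
        (ν.map (fun x => fun i : Fin q => idx (f^[(i : ℕ)] x))) {s} := by
        refine tsum_congr fun s => ?_
        rw [(atoms_ae_aux hidx hae haeI q s).2, Measure.map_apply hitm (measurableSet_singleton s)]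
    _ = ∫⁻ x, ∑ i : Fin q, (l (idx (f^[(i : ℕ)] x)) : ℝ≥0∞) ∂ν := by
        rw [← lintegral_countable' (fun s : Fin q → ℕ => (∑ i, (l (s i) : ℝ≥0∞))),
          lintegral_map (measurable_of_countable _) hitm]
    _ = ∑ i : Fin q, ∫⁻ x, (l (idx (f^[(i : ℕ)] x)) : ℝ≥0∞) ∂ν := by
        refine lintegral_finsetSum _ fun i _ => ?_
        exact (measurable_of_countable (fun j => (l j : ℝ≥0∞))).comp
          (hidxm.comp (hpres.measurable.iterate i))
    _ = ∑ i : Fin q, ∫⁻ x, (l (idx x) : ℝ≥0∞) ∂ν := by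
        refine Finset.sum_congr rfl fun i _ => ?_
        exact (hpres.iterate i).lintegral_comp
          ((measurable_of_countable (fun j => (l j : ℝ≥0∞))).comp hidxm)
    _ = _ := by simp

/-- Upper semicontinuity of the integral of the weight. -/
theorem limsup_weight_aux {η : X → ℝ} (hηc : Continuous η) {P : ℕ → Set X}
    (hηP : ∀ j, ∀ x ∈ P j, η x ≠ 0) (hPm : ∀ j, MeasurableSet (P j))
    {μseq : ℕ → Measure X} {μ : Measure X}
    [∀ n, IsProbabilityMeasure (μseq n)] [IsProbabilityMeasure μ]
    (h_opens : ∀ G, IsOpen G → μ G ≤ atTop.liminf (fun i ↦ μseq i G))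
    (hint : ∀ n, Integrable (fun x => Real.log (η x)) (μseq n))
    (hintμ : Integrable (fun x => Real.log (η x)) μ)
    (haen : ∀ n, ∀ᵐ x ∂(μseq n), x ∈ ⋃ j, P j)
    (hae : ∀ᵐ x ∂μ, x ∈ ⋃ j, P j)
    (hlim : Tendsto (fun n => ∫ x, Real.log (η x) ∂(μseq n)) atTop
      (𝓝 (∫ x, Real.log (η x) ∂μ)))
    (hbd : ∀ i, μ (frontier (P i)) = 0)
    {idx : X → ℕ} (hidxm : Measurable idx) (hidx : ∀ j x, x ∈ P j → idx x = j)
    {a : ℝ} {l : ℕ → ℝ≥0} (hl : ∀ j x, x ∈ P j → (l j : ℝ) ≤ a * (1 - Real.log (η x))) :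
    limsup (fun n => ∫⁻ x, l (idx x) ∂(μseq n)) atTop ≤ ∫⁻ x, l (idx x) ∂μ ∧
      ∫⁻ x, l (idx x) ∂μ ≠ ∞ := by
  set b : X → ℝ := fun x => a * (1 - Real.log (η x)) with hb
  have hbm : Measurable b := ((hηc.measurable.log.const_sub 1).const_mul a)
  have hlm : Measurable (fun x => (l (idx x) : ℝ)) :=
    (measurable_of_countable (fun j => (l j : ℝ))).comp hidxm
  have hlm' : Measurable (fun x => (l (idx x) : ℝ≥0∞)) :=
    (measurable_of_countable (fun j => (l j : ℝ≥0∞))).comp hidxm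
  have hble : ∀ x, x ∈ ⋃ j, P j → (l (idx x) : ℝ) ≤ b x := by
    intro x hx
    obtain ⟨j, hj⟩ := mem_iUnion.1 hx
    rw [hidx j x hj]
    exact hl j x hj
  have hsplit : ∀ ν : Measure X, (∀ᵐ x ∂ν, x ∈ ⋃ j, P j) →
      ∫⁻ x, l (idx x) ∂ν + ∫⁻ x, ENNReal.ofReal (b x - l (idx x)) ∂ν
        = ∫⁻ x, ENNReal.ofReal (b x) ∂ν := by
    intro ν hν
    rw [← lintegral_add_left hlm']
    refine lintegral_congr_ae ?_
    filter_upwards [hν] with x hx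
    have := hble x hx
    rw [← ENNReal.ofReal_coe_nnreal, ← ENNReal.ofReal_add (by positivity) (by linarith)]
    congr 1
    ring
  have hBint : ∀ ν : Measure X, [IsProbabilityMeasure ν] → (∀ᵐ x ∂ν, x ∈ ⋃ j, P j) →
      Integrable (fun x => Real.log (η x)) ν →
      ∫⁻ x, ENNReal.ofReal (b x) ∂ν = ENNReal.ofReal (a * (1 - ∫ x, Real.log (η x) ∂ν)) := by
    intro ν _ hν hi
    have hbi : Integrable b ν := ((integrable_const 1).sub hi).const_mul a
    rw [← ofReal_integral_eq_lintegral_ofReal hbi]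
    · congr 1
      rw [hb, integral_const_mul, integral_sub (integrable_const 1) hi]
      simp
    · filter_upwards [hν] with x hx
      exact le_trans (by positivity) (hble x hx)
  have hfinB : ∫⁻ x, ENNReal.ofReal (b x) ∂μ ≠ ∞ := by
    rw [hBint μ hae hintμ]; exact ENNReal.ofReal_ne_top
  refine ⟨?_, ne_top_of_le_ne_top hfinB ((hsplit μ hae) ▸ le_self_add)⟩
  refine limsup_le_of_add_aux _ (fun n => ∫⁻ x, ENNReal.ofReal (b x - l (idx x)) ∂(μseq n))
    (fun n => ∫⁻ x, ENNReal.ofReal (b x) ∂(μseq n)) _ (∫⁻ x, ENNReal.ofReal (b x - l (idx x)) ∂μ)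
    (∫⁻ x, ENNReal.ofReal (b x) ∂μ) (fun n => hsplit _ (haen n)) (hsplit _ hae) ?_ ?_
    (ne_top_of_le_ne_top hfinB ((hsplit μ hae) ▸ le_add_self))
  · rw [hBint μ hae hintμ]
    have : (fun n => ∫⁻ x, ENNReal.ofReal (b x) ∂(μseq n)) =
        fun n => ENNReal.ofReal (a * (1 - ∫ x, Real.log (η x) ∂(μseq n))) :=
      funext fun n => hBint _ (haen n) (hint n)
    rw [this]
    refine le_of_eq (Tendsto.limsup_eq ?_)
    exact ENNReal.tendsto_ofReal ((hlim.const_sub 1).const_mul a)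
  · classical
    set U : Set X := ⋃ j, interior (P j) with hU
    have hUo : IsOpen U := isOpen_iUnion fun j => isOpen_interior
    set H : X → ℝ := U.indicator (fun x => b x - l (idx x)) with hH
    have hUP : ∀ x ∈ U, x ∈ ⋃ j, P j := fun x hx => by
      obtain ⟨j, hj⟩ := mem_iUnion.1 hx
      exact mem_iUnion.2 ⟨j, interior_subset hj⟩
    have hH0 : 0 ≤ H := fun x => Set.indicator_nonneg (fun x hx => by
      have := hble x (hUP x hx)
      linarith) x
    have hHm : Measurable H := (hbm.sub hlm).indicator hUo.measurableSet
    have hHo : ∀ t, 0 < t → IsOpen {x | t < H x} := by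
      intro t ht
      rw [isOpen_iff_mem_nhds]
      intro x hx
      have hxU : x ∈ U := by
        by_contra hxU
        have : H x = 0 := Set.indicator_of_notMem hxU _
        simp only [mem_ofPred_eq, this] at hx
        linarith
      obtain ⟨j, hj⟩ := mem_iUnion.1 hxU
      have hHj : ∀ y ∈ interior (P j), H y = b y - l j := by
        intro y hy
        rw [hH, Set.indicator_of_mem (mem_iUnion.2 ⟨j, hy⟩), hidx j y (interior_subset hy)]
      have hcb : ContinuousAt (fun y => b y - l j) x := by
        have : η x ≠ 0 := hηP j x (interior_subset hj)
        exact ((continuousAt_const.sub (hηc.continuousAt.log this)).const_mul a).sub continuousAt_const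
      have hx' : t < b x - l j := by rw [← hHj x hj]; exact hx
      filter_upwards [hcb.eventually (lt_mem_nhds hx'), isOpen_interior.mem_nhds hj] with y hy1 hy2
      rw [hHj y hy2]
      exact hy1
    have hfat := lintegral_le_liminf_lsc_aux hH0 hHm hHo h_opens
    calc ∫⁻ x, ENNReal.ofReal (b x - l (idx x)) ∂μ = ∫⁻ x, ENNReal.ofReal (H x) ∂μ := by
          refine lintegral_congr_ae ?_
          have hfr : ∀ᵐ x ∂μ, ∀ j, x ∉ frontier (P j) := by
            rw [ae_all_iff]
            intro j
            rw [ae_iff]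
            simpa using hbd j
          filter_upwards [hae, hfr] with x hx hxf
          obtain ⟨j, hj⟩ := mem_iUnion.1 hx
          have hxi : x ∈ interior (P j) := by
            by_contra h
            exact hxf j ⟨subset_closure hj, h⟩
          rw [hH, Set.indicator_of_mem (mem_iUnion.2 ⟨j, hxi⟩)]
      _ ≤ _ := hfat
      _ ≤ _ := by
          refine liminf_le_liminf (Eventually.of_forall fun n => lintegral_mono fun x => ?_)
          by_cases hx : x ∈ U
          · simp [hH, hx]
          · simp [hH, hx]

theorem weak_aux {μseq : ℕ → Measure X} {μ : Measure X}
    (hpn : ∀ n, IsProbabilityMeasure (μseq n)) (hp : IsProbabilityMeasure μ)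
    (hweak : ∀ g : C(X, ℝ),
      Tendsto (fun n => ∫ x, g x ∂(μseq n)) atTop (𝓝 (∫ x, g x ∂μ))) :
    (∀ G, IsOpen G → μ G ≤ atTop.liminf (fun i ↦ μseq i G)) ∧
    ∀ E, μ (frontier E) = 0 → Tendsto (fun n => μseq n E) atTop (𝓝 (μ E)) := by
  let m : ℕ → ProbabilityMeasure X := fun n => ⟨μseq n, hpn n⟩
  let m0 : ProbabilityMeasure X := ⟨μ, hp⟩
  have hconv : Tendsto m atTop (𝓝 m0) := by
    rw [ProbabilityMeasure.tendsto_iff_forall_integral_tendsto]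
    intro g
    exact hweak g.toContinuousMap
  exact ⟨fun G hG => ProbabilityMeasure.le_liminf_measure_open_of_tendsto hconv hG,
    fun E hE => ProbabilityMeasure.tendsto_measure_of_null_frontier_of_tendsto' hconv hE⟩


/-- **Proposition (upper semicontinuity of `h_·(f,𝒫)`).** Let `(μ_n)` be a sequence of `𝓜`
converging weakly to `μ ∈ 𝓜` with `lim_n ∫ log η dμ_n = ∫ log η dμ > -∞` (the condition
`> -∞` is encoded as integrability of `log ∘ η` together with `ν{η = 0} = 0`). If `μ`
gives no mass to the boundaries of the atoms of the Mané partition `𝒫`, then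
`limsup_n h_{μ_n}(f, 𝒫) ≤ h_μ(f, 𝒫)`, where `𝒫` is restricted to `Ω`. -/
theorem entropy_wrt_mane_partition_usc
    (k : ℕ) (f : X → X) (I : Set X) (hI : IsClosed I)
    (hf : Measurable f) (hfc : ContinuousOn f Iᶜ)
    (η : X → ℝ) (hηc : Continuous η) (hη01 : ∀ x, η x ∈ Icc (0 : ℝ) 1)
    (hηI : ∀ x ∈ I, η x = 0)
    (P : ℕ → Set X) (hP : IsManePartition k η P)
    (μseq : ℕ → Measure X) (μ : Measure X)
    (hμseq : ∀ n, MemM f I (μseq n)) (hμ : MemM f I μ)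
    (hweak : ∀ g : C(X, ℝ),
      Tendsto (fun n => ∫ x, g x ∂(μseq n)) atTop (𝓝 (∫ x, g x ∂μ)))
    (hint : ∀ n, Integrable (fun x => Real.log (η x)) (μseq n))
    (hzero : ∀ n, (μseq n) {x | η x = 0} = 0)
    (hintμ : Integrable (fun x => Real.log (η x)) μ)
    (hzeroμ : μ {x | η x = 0} = 0)
    (hlim : Tendsto (fun n => ∫ x, Real.log (η x) ∂(μseq n)) atTop
      (𝓝 (∫ x, Real.log (η x) ∂μ)))
    (hbd : ∀ i, μ (frontier (P i)) = 0) :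
    Filter.limsup
      (fun n => dynEntropy f (μseq n) (fun i => P i ∩ dynOmega f I)) atTop
      ≤ dynEntropy f μ (fun i => P i ∩ dynOmega f I) := by
  obtain ⟨a, l, ha, hW, hl⟩ := exists_weights_aux k η P hP
  obtain ⟨⟨hPm, hPd, hPu⟩, -, -⟩ := hP
  obtain ⟨idx, hidxm, hidx⟩ := exists_idx_aux P hPm hPd
  have hpn : ∀ n, IsProbabilityMeasure (μseq n) := fun n => (hμseq n).1
  have hp : IsProbabilityMeasure μ := hμ.1
  have hpresn := fun n => measurePreserving_aux hf (hμseq n)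
  have hpres := measurePreserving_aux hf hμ
  have hZm : MeasurableSet {x | η x = 0} := hηc.measurable (measurableSet_singleton 0)
  have hmem : ∀ x, η x ≠ 0 → x ∈ ⋃ j, P j := fun x hx => by rw [hPu]; exact hx
  have haeAll : ∀ ν : Measure X, MeasurePreserving f ν ν → ν {x | η x = 0} = 0 →
      ∀ᵐ x ∂ν, ∀ n : ℕ, f^[n] x ∈ ⋃ j, P j := fun ν h h0 => by
    filter_upwards [ae_orbit_aux h hZm h0] with x hx n
    exact hmem _ (hx n)
  have haeIn := fun n => ae_orbit_aux (hpresn n) hI.measurableSet (hμseq n).2.1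
  have haeI := ae_orbit_aux hpres hI.measurableSet hμ.2.1
  have haen := fun n => haeAll _ (hpresn n) (hzero n)
  have hae := haeAll _ hpres hzeroμ
  -- weak convergence
  obtain ⟨h_opens, hnull⟩ := weak_aux hpn hp hweak
  obtain ⟨hK, hKfin⟩ := limsup_weight_aux hηc
    (fun j x hx => by
      have : x ∈ ⋃ j, P j := mem_iUnion.2 ⟨j, hx⟩
      rw [hPu] at this
      exact this) hPm h_opens hint hintμ
    (fun n => (haen n).mono fun x hx => hx 0) (hae.mono fun x hx => hx 0) hlim hbd hidxm hidx hl
  -- convergence of the measures of the atoms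
  have hatom : ∀ (q : ℕ) (s : Fin q → ℕ),
      Tendsto (fun n => μseq n (refinedAtoms f (fun i => P i ∩ dynOmega f I) q s)) atTop
        (𝓝 (μ (refinedAtoms f (fun i => P i ∩ dynOmega f I) q s))) := by
    intro q s
    rw [(atoms_ae_aux hidx hae haeI q s).1]
    simp_rw [fun n => (atoms_ae_aux hidx (haen n) (haeIn n) q s).1]
    refine hnull _ ?_
    refine measure_mono_null (frontier_aux f I hI hfc P q s) ?_
    rw [measure_iUnion_null_iff]
    intro i
    refine measure_union_null ?_ (measure_iUnion_null fun j => ?_)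
    · exact ((hpres.iterate i).measure_preimage hI.measurableSet.nullMeasurableSet).trans hμ.2.1
    · exact ((hpres.iterate i).measure_preimage
        isClosed_frontier.measurableSet.nullMeasurableSet).trans (hbd j)
  -- the key estimate
  have key : ∀ q : ℕ, limsup (fun n => partEntropy (μseq n)
      (refinedAtoms f (fun i => P i ∩ dynOmega f I) q)) atTop
      ≤ partEntropy μ (refinedAtoms f (fun i => P i ∩ dynOmega f I) q) := by
    intro q
    unfold partEntropy
    refine limsup_tsum_le_aux _
      (fun n s => (∑ i, (l (s i) : ℝ≥0∞)) *
        μseq n (refinedAtoms f (fun i => P i ∩ dynOmega f I) q s)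
        + ∏ i, ENNReal.ofReal (Real.exp (-(l (s i) : ℝ)))) _
      (fun s => (∑ i, (l (s i) : ℝ≥0∞)) *
        μ (refinedAtoms f (fun i => P i ∩ dynOmega f I) q s)
        + ∏ i, ENNReal.ofReal (Real.exp (-(l (s i) : ℝ)))) ?_ ?_ ?_ ?_ ?_
    · intro s
      refine ENNReal.tendsto_ofReal ((Real.continuous_negMulLog.tendsto _).comp ?_)
      exact (ENNReal.tendsto_toReal (measure_ne_top _ _)).comp (hatom q s)
    · intro s
      refine Tendsto.add ?_ tendsto_const_nhds
      refine ENNReal.Tendsto.const_mul (hatom q s) (Or.inr ?_)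
      exact ENNReal.sum_ne_top.2 fun i _ => ENNReal.coe_ne_top
    · intro n s
      set A := refinedAtoms f (fun i => P i ∩ dynOmega f I) q s
      have h1 := negMulLog_le_aux ((μseq n A).toReal) (∑ i, (l (s i) : ℝ)) ENNReal.toReal_nonneg
      refine (ENNReal.ofReal_le_ofReal h1).trans (le_of_eq ?_)
      rw [ENNReal.ofReal_add (by positivity) (by positivity),
        ENNReal.ofReal_mul (by positivity), ENNReal.ofReal_toReal (measure_ne_top _ _),
        ENNReal.ofReal_sum_of_nonneg (fun i _ => by positivity), ← Finset.sum_neg_distrib,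
        Real.exp_sum, ENNReal.ofReal_prod_of_nonneg (fun i _ => by positivity)]
      simp
    · rw [gsum_aux hidxm hpres hidx hae haeI q l]
      exact ENNReal.add_ne_top.2 ⟨ENNReal.mul_ne_top (by simp) hKfin, ENNReal.pow_ne_top hW⟩
    · rw [gsum_aux hidxm hpres hidx hae haeI q l]
      simp_rw [fun n => gsum_aux hidxm (hpresn n) hidx (haen n) (haeIn n) q l]
      rw [limsup_add_const atTop _ _ (by isBoundedDefault) (by isBoundedDefault),
        ENNReal.limsup_const_mul_of_ne_top (by simp)]
      gcongr
  unfold dynEntropy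
  refine le_iInf fun q => ?_
  calc _ ≤ limsup (fun n => partEntropy (μseq n)
          (refinedAtoms f (fun i => P i ∩ dynOmega f I) (q + 1)) / (q + 1)) atTop :=
        limsup_le_limsup (Eventually.of_forall fun n => iInf_le _ q)
    _ = limsup (fun n => partEntropy (μseq n)
          (refinedAtoms f (fun i => P i ∩ dynOmega f I) (q + 1))) atTop / (q + 1) := by
        simp_rw [div_eq_mul_inv, mul_comm _ ((q : ℝ≥0∞) + 1)⁻¹]
        exact ENNReal.limsup_const_mul_of_ne_top (by simp)
    _ ≤ _ := by
        gcongr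
        exact key (q + 1)
end
end

section
/- For every ν ∈ 𝓜 with ∫ log η dν > −∞, one has h_ν(f) ≤ h_ν(f,𝒫) + h_{ν,η,loc}(f), where 𝒫 is the Mańé partition associated to η (restricted to Ω). -/
open MeasureTheory Filter Metric Set
open scoped ENNReal NNReal Topology

noncomputable section

variable {X : Type*} [MetricSpace X] [CompactSpace X] [MeasurableSpace X] [BorelSpace X]

/-- The dynamical ball
`B(x, η, n, f) = {y ∈ Ω : dist(f^i x, f^i y) ≤ η(f^i x) for i = 0, …, n-1}`. -/
def dynBall (f : X → X) (Ω : Set X) (η : X → ℝ) (x : X) (n : ℕ) : Set X :=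
  {y ∈ Ω | ∀ i < n, dist (f^[i] x) (f^[i] y) ≤ η (f^[i] x)}

/-- A set is `(n,γ)`-separated if any two distinct points are `γ`-apart at some time `< n`. -/
def IsDynSep (f : X → X) (n : ℕ) (γ : ℝ) (S : Set X) : Prop :=
  S.Pairwise fun y z => ∃ i < n, γ < dist (f^[i] y) (f^[i] z)

/-- `r(n, γ, η, Λ, x)`: the maximal cardinality of an `(n,γ)`-separated subset of
`B(x, η, n, f) ∩ Λ`. -/
def sepCount (f : X → X) (Ω : Set X) (η : X → ℝ) (n : ℕ) (γ : ℝ) (Λ : Set X) (x : X) : ℕ :=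
  sSup {m : ℕ | ∃ S : Finset X,
    ↑S ⊆ dynBall f Ω η x n ∩ Λ ∧ IsDynSep f n γ ↑S ∧ S.card = m}

/-- The local entropy
`h_{ν,η,loc}(f) = lim_{σ→1⁻} inf_{Λ : ν(Λ) ≥ σ} lim_{γ→0} limsup_n (1/n) ∫_Λ log r(n,γ,η,Λ,x) dν(x)`.
Since `r` is nonincreasing in `γ` and the infimum over `Λ` is nondecreasing in `σ`, the two
outer limits are the suprema over `γ > 0` and over `σ < 1` respectively; the value is taken
in `ℝ≥0∞`. -/
def locEntropy (f : X → X) (Ω : Set X) (η : X → ℝ) (ν : Measure X) : ℝ≥0∞ :=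
  ⨆ σ : Ioo (0 : ℝ) 1, ⨅ Λ : {Λ : Set X // ENNReal.ofReal σ.1 ≤ ν Λ},
    ⨆ γ : Ioi (0 : ℝ),
      Filter.limsup
        (fun n : ℕ =>
          (∫⁻ x in (Λ : Set X),
            ENNReal.ofReal (Real.log (sepCount f Ω η n γ.1 Λ x)) ∂ν) / n)
        atTop

/-- The metric entropy `h_ν(f)`: the supremum of `h_ν(f, 𝒬)` over all countable Borel
partitions `𝒬` of `Ω` with `H_ν(𝒬) < ∞`. -/
def metricEntropy (f : X → X) (Ω : Set X) (ν : Measure X) : ℝ≥0∞ :=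
  ⨆ Q : {Q : ℕ → Set X // IsCountablePartition Ω Q ∧ partEntropy ν Q < ⊤},
    dynEntropy f ν Q.1

/-- The information `-log p`. -/
def ell (p : ℝ≥0∞) : ℝ≥0∞ := ENNReal.ofReal (-Real.log p.toReal)

lemma phi_eq (p : ℝ≥0∞) (hp : p ≤ 1) :
    ENNReal.ofReal (Real.negMulLog p.toReal) = p * ell p := by
  have : p ≠ ⊤ := ne_top_of_le_ne_top ENNReal.one_ne_top hp
  rw [ell, Real.negMulLog, neg_mul, ← mul_neg, ENNReal.ofReal_mul ENNReal.toReal_nonneg,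
    ENNReal.ofReal_toReal this]

lemma ell_anti {p u : ℝ≥0∞} (hp : p ≠ 0) (hpu : p ≤ u) (hu : u ≤ 1) : ell u ≤ ell p := by
  have hut : u ≠ ⊤ := ne_top_of_le_ne_top ENNReal.one_ne_top hu
  have hpt : p ≠ ⊤ := ne_top_of_le_ne_top hut hpu
  apply ENNReal.ofReal_le_ofReal
  have := ENNReal.toReal_pos hp hpt
  have h2 := ENNReal.toReal_mono hut hpu
  have := Real.log_le_log this h2
  linarith

lemma gibbs_real {p y : ℝ} (hp : 0 < p) (hy : 0 < y) :
    p * (-Real.log p) + p ≤ p * (-Real.log y) + y := by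
  have h := Real.log_le_sub_one_of_pos (div_pos hy hp)
  rw [Real.log_div hy.ne' hp.ne'] at h
  have h2 := mul_le_mul_of_nonneg_left h hp.le
  have : p * (y / p - 1) = y - p := by field_simp
  nlinarith

lemma gibbs {p u : ℝ≥0∞} (hp : p ≠ 0) (hpu : p ≤ u) (hu : u ≤ 1) {w : ℝ} (hw : 0 < w)
    (hw1 : w ≤ 1) :
    p * ell p + p ≤ p * ell u + p * ENNReal.ofReal (-Real.log w) + u * ENNReal.ofReal w := by
  have hut : u ≠ ⊤ := ne_top_of_le_ne_top ENNReal.one_ne_top hu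
  have hpt : p ≠ ⊤ := ne_top_of_le_ne_top hut hpu
  have hp0 := ENNReal.toReal_pos hp hpt
  have h2 := ENNReal.toReal_mono hut hpu
  have hu1 : u.toReal ≤ 1 := by simpa using ENNReal.toReal_mono ENNReal.one_ne_top hu
  have hu0 : 0 < u.toReal := hp0.trans_le h2
  have hlp : 0 ≤ -Real.log p.toReal := by
    have := Real.log_nonpos hp0.le (h2.trans hu1); linarith
  have hlu : 0 ≤ -Real.log u.toReal := by
    have := Real.log_nonpos hu0.le hu1; linarith
  have hlw : 0 ≤ -Real.log w := by
    have := Real.log_nonpos hw.le hw1; linarith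
  have key := gibbs_real hp0 (mul_pos hu0 hw)
  rw [Real.log_mul hu0.ne' hw.ne'] at key
  have k2 := ENNReal.ofReal_le_ofReal (show p.toReal * (-Real.log p.toReal) + p.toReal ≤
    p.toReal * (-Real.log u.toReal) + p.toReal * (-Real.log w) + u.toReal * w by linarith)
  rw [ENNReal.ofReal_add (by positivity) (by positivity),
    ENNReal.ofReal_add (by positivity) (by positivity),
    ENNReal.ofReal_add (by positivity) (by positivity),
    ENNReal.ofReal_mul hp0.le, ENNReal.ofReal_mul hp0.le, ENNReal.ofReal_mul hp0.le,
    ENNReal.ofReal_mul hu0.le, ENNReal.ofReal_toReal hpt, ENNReal.ofReal_toReal hut] at k2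
  exact k2

/-- Entropy of a discrete random variable. -/
def Hrv {α ι : Type*} [MeasurableSpace α] (ν : Measure α) (a : α → ι) : ℝ≥0∞ :=
  ∑' i, ENNReal.ofReal (Real.negMulLog (ν (a ⁻¹' {i})).toReal)

set_option linter.unusedSectionVars false

section rv
variable {α ι κ : Type*} [MeasurableSpace α] {ν : Measure α} [IsProbabilityMeasure ν]
  [Countable ι] [MeasurableSpace ι] [MeasurableSingletonClass ι]
  [Countable κ] [MeasurableSpace κ] [MeasurableSingletonClass κ]

lemma Hrv_eq {ι : Type*} (a : α → ι) : Hrv ν a = ∑' i, ν (a ⁻¹' {i}) * ell (ν (a ⁻¹' {i})) := by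
  unfold Hrv
  congr 1; ext i
  rw [phi_eq _ prob_le_one]

lemma tsum_inter_fiber {Y : α → κ} (hY : Measurable Y) {s : Set α} (hs : MeasurableSet s) :
    ∑' j, ν (s ∩ Y ⁻¹' {j}) = ν s := by
  rw [← measure_iUnion]
  · congr 1; ext x; simp
  · intro i j hij
    refine Set.disjoint_left.2 ?_
    rintro x ⟨_, hx⟩ ⟨_, hx'⟩
    exact hij (by simp at hx hx'; rw [← hx, hx'])
  · intro j; exact hs.inter (hY (measurableSet_singleton _))

lemma tsum_fiber {Y : α → κ} (hY : Measurable Y) : ∑' j, ν (Y ⁻¹' {j}) = 1 := by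
  have := tsum_inter_fiber (ν := ν) hY MeasurableSet.univ
  simpa using this

lemma Hrv_comp_le {Y : α → κ} (hY : Measurable Y) {ι : Type*} (g : κ → ι) :
    Hrv ν (fun x => g (Y x)) ≤ Hrv ν Y := by
  classical
  rw [Hrv_eq, Hrv_eq]
  have h1 : ∀ i : ι, ν ((fun x => g (Y x)) ⁻¹' {i}) * ell (ν ((fun x => g (Y x)) ⁻¹' {i}))
      ≤ ∑' j, if g j = i then ν (Y ⁻¹' {j}) * ell (ν (Y ⁻¹' {j})) else 0 := by
    intro i
    have hm : MeasurableSet ((fun x => g (Y x)) ⁻¹' {i}) :=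
      hY ((Set.to_countable (g ⁻¹' {i})).measurableSet)
    conv_lhs => enter [1]; rw [← tsum_inter_fiber hY hm]
    rw [← ENNReal.tsum_mul_right]
    refine ENNReal.tsum_le_tsum fun j => ?_
    by_cases hj : g j = i
    · have : ((fun x => g (Y x)) ⁻¹' {i}) ∩ Y ⁻¹' {j} = Y ⁻¹' {j} := by
        ext x; simp; rintro rfl; exact hj
      rw [this, if_pos hj]
      by_cases h0 : ν (Y ⁻¹' {j}) = 0
      · simp [h0]
      · gcongr
        refine ell_anti h0 (measure_mono ?_) prob_le_one
        intro x; simp; rintro rfl; exact hj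
    · have : ((fun x => g (Y x)) ⁻¹' {i}) ∩ Y ⁻¹' {j} = ∅ := by
        ext x; simp; rintro h rfl; exact hj h
      simp [this]
  refine (ENNReal.tsum_le_tsum h1).trans ?_
  rw [ENNReal.tsum_comm]
  refine ENNReal.tsum_le_tsum fun j => ?_
  simp only [tsum_ite_eq, eq_comm (a := g j), le_refl]

lemma pair_fiber (Z : α → ι) (Y : α → κ) (i : ι) (j : κ) :
    (fun x => (Z x, Y x)) ⁻¹' {(i, j)} = Z ⁻¹' {i} ∩ Y ⁻¹' {j} := by
  ext x; simp

lemma Hrv_pair_le {Z : α → ι} (hZ : Measurable Z) {Y : α → κ} (hY : Measurable Y) :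
    Hrv ν (fun x => (Z x, Y x)) ≤ Hrv ν Z + Hrv ν Y := by
  have hYi : ∀ j, ∑' i, ν (Z ⁻¹' {i} ∩ Y ⁻¹' {j}) = ν (Y ⁻¹' {j}) := fun j => by
    simp only [inter_comm _ (Y ⁻¹' {j})]
    exact tsum_inter_fiber hZ (hY (measurableSet_singleton _))
  have hZi : ∀ i, ∑' j, ν (Z ⁻¹' {i} ∩ Y ⁻¹' {j}) = ν (Z ⁻¹' {i}) := fun i =>
    tsum_inter_fiber hY (hZ (measurableSet_singleton _))
  rw [← ENNReal.add_le_add_iff_right (a := 1) ENNReal.one_ne_top]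
  rw [Hrv_eq, Hrv_eq, Hrv_eq]
  rw [ENNReal.tsum_prod']
  simp_rw [pair_fiber]
  calc (∑' i, ∑' j, ν (Z ⁻¹' {i} ∩ Y ⁻¹' {j}) * ell (ν (Z ⁻¹' {i} ∩ Y ⁻¹' {j}))) + 1
      = ∑' i, ∑' j, (ν (Z ⁻¹' {i} ∩ Y ⁻¹' {j}) * ell (ν (Z ⁻¹' {i} ∩ Y ⁻¹' {j}))
          + ν (Z ⁻¹' {i} ∩ Y ⁻¹' {j})) := by
        simp_rw [ENNReal.tsum_add, hZi]
        rw [tsum_fiber hZ]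
    _ ≤ ∑' i, ∑' j, (ν (Z ⁻¹' {i} ∩ Y ⁻¹' {j}) * ell (ν (Z ⁻¹' {i}))
          + ν (Z ⁻¹' {i} ∩ Y ⁻¹' {j}) * ell (ν (Y ⁻¹' {j}))
          + ν (Z ⁻¹' {i}) * ν (Y ⁻¹' {j})) := by
        refine ENNReal.tsum_le_tsum fun i => ENNReal.tsum_le_tsum fun j => ?_
        by_cases h0 : ν (Z ⁻¹' {i} ∩ Y ⁻¹' {j}) = 0
        · simp [h0]
        · have hY0 : ν (Y ⁻¹' {j}) ≠ 0 := fun h => h0 (measure_mono_null inter_subset_right h)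
          have := gibbs h0 (measure_mono inter_subset_left) (prob_le_one (μ := ν) (s := Z ⁻¹' {i}))
            (w := (ν (Y ⁻¹' {j})).toReal) (ENNReal.toReal_pos hY0 (measure_ne_top _ _))
            (by simpa using ENNReal.toReal_mono ENNReal.one_ne_top (prob_le_one (μ := ν)))
          rw [ENNReal.ofReal_toReal (measure_ne_top _ _)] at this
          exact this
    _ = (∑' i, ν (Z ⁻¹' {i}) * ell (ν (Z ⁻¹' {i}))) +
          (∑' j, ν (Y ⁻¹' {j}) * ell (ν (Y ⁻¹' {j}))) + 1 := by
        simp_rw [ENNReal.tsum_add, ENNReal.tsum_mul_right, ENNReal.tsum_mul_left, hZi]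
        rw [ENNReal.tsum_comm (f := fun i j => ν (Z ⁻¹' {i} ∩ Y ⁻¹' {j}) * ell (ν (Y ⁻¹' {j})))]
        simp_rw [ENNReal.tsum_mul_right, hYi]
        rw [tsum_fiber hZ, tsum_fiber hY, one_mul]

lemma Hrv_pair_le_count {Z : α → ι} (hZ : Measurable Z) {Y : α → κ} (hY : Measurable Y)
    (hfin : ∀ i, {j | ν (Z ⁻¹' {i} ∩ Y ⁻¹' {j}) ≠ 0}.Finite) :
    Hrv ν (fun x => (Z x, Y x)) ≤ Hrv ν Z +
      ∫⁻ x, ENNReal.ofReal (Real.log ({j | ν (Z ⁻¹' {Z x} ∩ Y ⁻¹' {j}) ≠ 0}.ncard : ℝ)) ∂ν := by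
  classical
  set J : ι → Set κ := fun i => {j | ν (Z ⁻¹' {i} ∩ Y ⁻¹' {j}) ≠ 0} with hJ
  have hint : ∫⁻ x, ENNReal.ofReal (Real.log ((J (Z x)).ncard : ℝ)) ∂ν
      = ∑' i, ν (Z ⁻¹' {i}) * ENNReal.ofReal (Real.log ((J i).ncard : ℝ)) := by
    have h1 : ∫⁻ x, ENNReal.ofReal (Real.log ((J (Z x)).ncard : ℝ)) ∂ν
      = ∫⁻ i, ENNReal.ofReal (Real.log ((J i).ncard : ℝ)) ∂(ν.map Z) :=
      (lintegral_map (f := fun i => ENNReal.ofReal (Real.log ((J i).ncard : ℝ)))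
        (measurable_of_countable _) hZ).symm
    rw [h1, lintegral_countable']
    congr 1; ext i
    rw [Measure.map_apply hZ (measurableSet_singleton _), mul_comm]
  change _ ≤ _ + ∫⁻ x, ENNReal.ofReal (Real.log ((J (Z x)).ncard : ℝ)) ∂ν
  rw [hint]
  have hZi : ∀ i, ∑' j, ν (Z ⁻¹' {i} ∩ Y ⁻¹' {j}) = ν (Z ⁻¹' {i}) := fun i =>
    tsum_inter_fiber hY (hZ (measurableSet_singleton _))
  rw [← ENNReal.add_le_add_iff_right (a := 1) ENNReal.one_ne_top]
  rw [Hrv_eq, Hrv_eq]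
  rw [ENNReal.tsum_prod']
  simp_rw [pair_fiber]
  calc (∑' i, ∑' j, ν (Z ⁻¹' {i} ∩ Y ⁻¹' {j}) * ell (ν (Z ⁻¹' {i} ∩ Y ⁻¹' {j}))) + 1
      = ∑' i, ∑' j, (ν (Z ⁻¹' {i} ∩ Y ⁻¹' {j}) * ell (ν (Z ⁻¹' {i} ∩ Y ⁻¹' {j}))
          + ν (Z ⁻¹' {i} ∩ Y ⁻¹' {j})) := by
        simp_rw [ENNReal.tsum_add, hZi]
        rw [tsum_fiber hZ]
    _ ≤ ∑' i, ∑' j, (ν (Z ⁻¹' {i} ∩ Y ⁻¹' {j}) * ell (ν (Z ⁻¹' {i}))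
          + ν (Z ⁻¹' {i} ∩ Y ⁻¹' {j}) * ENNReal.ofReal (Real.log ((J i).ncard : ℝ))
          + ν (Z ⁻¹' {i}) * (if j ∈ J i then ENNReal.ofReal (((J i).ncard : ℝ)⁻¹) else 0)) := by
        refine ENNReal.tsum_le_tsum fun i => ENNReal.tsum_le_tsum fun j => ?_
        by_cases h0 : ν (Z ⁻¹' {i} ∩ Y ⁻¹' {j}) = 0
        · simp [h0]
        · have hj : j ∈ J i := h0
          have hc : 0 < (J i).ncard := (Set.ncard_pos (hfin i)).2 ⟨j, hj⟩
          have hc1 : (1 : ℝ) ≤ (J i).ncard := by exact_mod_cast hc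
          have := gibbs h0 (measure_mono inter_subset_left) (prob_le_one (μ := ν) (s := Z ⁻¹' {i}))
            (w := ((J i).ncard : ℝ)⁻¹) (by positivity) (inv_le_one_of_one_le₀ hc1)
          rw [if_pos hj]
          rw [Real.log_inv, neg_neg] at this
          exact this
    _ = (∑' i, ν (Z ⁻¹' {i}) * ell (ν (Z ⁻¹' {i}))) +
          (∑' i, ν (Z ⁻¹' {i}) * ENNReal.ofReal (Real.log ((J i).ncard : ℝ))) +
          ∑' i, ν (Z ⁻¹' {i}) *
            (∑' j, if j ∈ J i then ENNReal.ofReal (((J i).ncard : ℝ)⁻¹) else 0) := by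
        simp_rw [ENNReal.tsum_add, ENNReal.tsum_mul_right, ENNReal.tsum_mul_left, hZi]
    _ ≤ _ := by
        gcongr
        rw [← tsum_fiber (ν := ν) hZ]
        refine ENNReal.tsum_le_tsum fun i => ?_
        refine mul_le_of_le_one_right zero_le ?_
        have hs : (∑' j, if j ∈ J i then ENNReal.ofReal (((J i).ncard : ℝ)⁻¹) else 0)
            = ∑ j ∈ (hfin i).toFinset, ENNReal.ofReal (((J i).ncard : ℝ)⁻¹) := by
          rw [tsum_eq_sum (s := (hfin i).toFinset)]
          · refine Finset.sum_congr rfl fun j hj => ?_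
            rw [if_pos]; exact (hfin i).mem_toFinset.1 hj
          · intro j hj
            rw [if_neg]; exact fun h => hj ((hfin i).mem_toFinset.2 h)
        rw [hs, Finset.sum_const, nsmul_eq_mul, ← Set.ncard_eq_toFinset_card (J i) (hfin i)]
        rcases Nat.eq_zero_or_pos (J i).ncard with h | h
        · simp [h]
        · have : (0 : ℝ) < (J i).ncard := by exact_mod_cast h
          rw [ENNReal.ofReal_inv_of_pos this, ENNReal.ofReal_natCast]
          exact ENNReal.mul_inv_le_one _

lemma Hrv_const (c : κ) : Hrv ν (fun _ : α => c) = 0 := by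
  unfold Hrv
  rw [ENNReal.tsum_eq_zero]
  intro i
  by_cases h : c = i
  · subst h; simp
  · have : (fun _ : α => c) ⁻¹' {i} = ∅ := by ext; simp [h]
    rw [this]; simp

lemma Hrv_bool_le {L : α → Bool} (hL : Measurable L) :
    Hrv ν L ≤ ENNReal.ofReal (Real.log 2) := by
  have h1 := Hrv_comp_le (ν := ν) (Y := fun x => ((), L x)) (by fun_prop) Prod.snd
  refine h1.trans ?_
  have h2 := Hrv_pair_le_count (ν := ν) (Z := fun _ => ()) measurable_const hL
    (fun i => Set.toFinite _)
  refine h2.trans ?_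
  rw [Hrv_const, zero_add]
  refine (lintegral_mono (g := fun _ => ENNReal.ofReal (Real.log 2)) fun x => ?_).trans (by simp)
  dsimp only
  generalize hs : {j | ν ((fun _ => ()) ⁻¹' {()} ∩ L ⁻¹' {j}) ≠ 0} = s
  have hc : s.ncard ≤ 2 := by
    have := Set.ncard_le_card (α := Bool) s
    simpa using this
  rcases Nat.eq_zero_or_pos s.ncard with h | h
  · simp [h]
  · exact ENNReal.ofReal_le_ofReal (Real.log_le_log (by exact_mod_cast h) (by exact_mod_cast hc))

/-- itinerary -/
def itin {ι : Type*} (f : α → α) (a : α → ι) (n : ℕ) (x : α) : Fin n → ι := fun i => a (f^[i] x)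

lemma measurable_itin {f : α → α} (hf : Measurable f) {a : α → ι} (ha : Measurable a) (n : ℕ) :
    Measurable (itin f a n) :=
  measurable_pi_lambda _ fun i => ha.comp (hf.iterate i)

lemma Hrv_comp_pres {g : α → α} (hg : MeasurePreserving g ν ν) {Y : α → κ} (hY : Measurable Y) :
    Hrv ν (fun x => Y (g x)) = Hrv ν Y := by
  unfold Hrv
  congr 1; ext j
  have : (fun x => Y (g x)) ⁻¹' {j} = g ⁻¹' (Y ⁻¹' {j}) := rfl
  rw [this, hg.measure_preimage (hY (measurableSet_singleton _)).nullMeasurableSet]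

lemma Hrv_itin_add {f : α → α} (hf : MeasurePreserving f ν ν) {a : α → ι} (ha : Measurable a)
    (m n : ℕ) : Hrv ν (itin f a (m + n)) ≤ Hrv ν (itin f a m) + Hrv ν (itin f a n) := by
  have hm := measurable_itin hf.measurable ha m
  have hn := measurable_itin hf.measurable ha n
  have hn' : Measurable fun x => itin f a n (f^[m] x) := hn.comp (hf.measurable.iterate m)
  have h1 := Hrv_pair_le (ν := ν) hm hn'
  rw [Hrv_comp_pres (hf.iterate m) hn] at h1
  refine le_trans ?_ h1
  have h2 := Hrv_comp_le (ν := ν) (hm.prodMk hn')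
    (fun p => Fin.append p.1 p.2)
  refine le_trans (le_of_eq ?_) h2
  congr 1
  ext x i
  refine Fin.addCases (fun i => ?_) (fun i => ?_) i
  · simp [itin]
  · simp [itin, ← Function.iterate_add_apply, add_comm]

lemma Hrv_itin_mul {f : α → α} (hf : MeasurePreserving f ν ν) {a : α → ι} (ha : Measurable a)
    (m q : ℕ) : Hrv ν (itin f a (m * q)) ≤ m * Hrv ν (itin f a q) := by
  induction m with
  | zero =>
    rw [Nat.zero_mul]
    have : itin f a 0 = fun _ => Fin.elim0 := by ext x i; exact i.elim0
    rw [this, Hrv_const]; simp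
  | succ m ih =>
    rw [Nat.succ_mul]
    refine (Hrv_itin_add hf ha _ _).trans ?_
    push_cast
    rw [add_mul, one_mul]
    gcongr

lemma Hrv_itin_le {f : α → α} (hf : MeasurePreserving f ν ν) {a : α → ι} (ha : Measurable a)
    (n : ℕ) : Hrv ν (itin f a n) ≤ n * Hrv ν a := by
  have h := Hrv_itin_mul hf ha n 1
  rw [mul_one] at h
  refine h.trans ?_
  gcongr
  exact Hrv_comp_le (ν := ν) ha (fun i => fun _ : Fin 1 => i) |>.trans' (le_of_eq (by
    congr 1; ext x i; fin_cases i; simp [itin]))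

end rv

section part2
variable {X : Type*} [MetricSpace X] [CompactSpace X] [MeasurableSpace X] [BorelSpace X]

lemma exists_label {S : Set X} {Q : ℕ → Set X} (hQ : IsCountablePartition S Q) :
    ∃ a : X → ℕ, Measurable a ∧ (∀ x i, x ∈ Q i → a x = i) ∧ ∀ x ∈ S, x ∈ Q (a x) := by
  classical
  obtain ⟨hm, hd, hU⟩ := hQ
  have huniq : ∀ x i j, x ∈ Q i → x ∈ Q j → i = j := by
    intro x i j hi hj
    by_contra h
    exact Set.disjoint_left.1 (hd h) hi hj
  refine ⟨fun x => if h : ∃ i, x ∈ Q i then h.choose else 0, ?_, ?_, ?_⟩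
  · refine measurable_to_countable' fun i => ?_
    have : (fun x => if h : ∃ i, x ∈ Q i then h.choose else 0) ⁻¹' {i}
        = Q i ∪ (if i = 0 then (⋃ i, Q i)ᶜ else ∅) := by
      ext x
      by_cases h : ∃ i, x ∈ Q i
      · have h' : x ∈ ⋃ i, Q i := by simpa using h
        have : x ∉ (if i = 0 then (⋃ i, Q i)ᶜ else ∅) := by
          split_ifs
          · exact fun hh => hh h'
          · simp
        simp only [mem_preimage, dif_pos h, mem_singleton_iff, mem_union, this, or_false]
        constructor
        · rintro rfl; exact h.choose_spec
        · intro hi; exact huniq x _ _ h.choose_spec hi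
      · have hx : x ∉ Q i := fun hi => h ⟨i, hi⟩
        have h' : x ∉ ⋃ i, Q i := by simpa using h
        simp only [mem_preimage, dif_neg h, mem_singleton_iff, mem_union, hx, false_or]
        constructor
        · rintro rfl; rw [if_pos rfl]; exact h'
        · intro hh
          by_contra hne
          rw [if_neg (fun h => hne h.symm)] at hh
          exact hh
    rw [this]
    refine (hm i).union ?_
    split_ifs
    · exact (MeasurableSet.iUnion hm).compl
    · exact MeasurableSet.empty
  · intro x i hi
    have h : ∃ i, x ∈ Q i := ⟨i, hi⟩
    simp only [dif_pos h]
    exact huniq x _ _ h.choose_spec hi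
  · intro x hx
    rw [← hU] at hx
    have h : ∃ i, x ∈ Q i := by simpa using hx
    simp only [dif_pos h]
    exact h.choose_spec

lemma ae_iterate {ν : Measure X} {f : X → X} (hf : MeasurePreserving f ν ν) {S : Set X}
    (hS : ∀ᵐ x ∂ν, x ∈ S) : ∀ᵐ x ∂ν, ∀ k, f^[k] x ∈ S := by
  rw [ae_all_iff]
  intro k
  exact (hf.iterate k).quasiMeasurePreserving.ae hS

lemma partEntropy_eq {ν : Measure X} {f : X → X} (hf : MeasurePreserving f ν ν) {S : Set X}
    (hS : ∀ᵐ x ∂ν, x ∈ S) {Q : ℕ → Set X} {a : X → ℕ} (ha1 : ∀ x i, x ∈ Q i → a x = i)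
    (ha2 : ∀ x ∈ S, x ∈ Q (a x)) (n : ℕ) :
    partEntropy ν (refinedAtoms f Q n) = Hrv ν (itin f a n) := by
  unfold partEntropy Hrv
  congr 1; ext s
  have : ν (refinedAtoms f Q n s) = ν (itin f a n ⁻¹' {s}) := by
    apply measure_congr
    filter_upwards [ae_iterate hf hS] with x hx
    apply propext
    change x ∈ refinedAtoms f Q n s ↔ x ∈ itin f a n ⁻¹' {s}
    simp only [refinedAtoms, mem_iInter, mem_preimage, mem_singleton_iff]
    constructor
    · intro h; ext i; exact ha1 _ _ (h i)
    · rintro rfl i; exact ha2 _ (hx i)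
  rw [this]

lemma sep_bdd (f : X → X) (n : ℕ) {γ : ℝ} (hγ : 0 < γ) (D : Set X) :
    BddAbove {m : ℕ | ∃ S : Finset X, ↑S ⊆ D ∧ IsDynSep f n γ ↑S ∧ S.card = m} := by
  classical
  obtain ⟨t, -, ht, hcov⟩ := finite_cover_balls_of_compact (isCompact_univ (X := X)) (half_pos hγ)
  have hc : ∀ x : X, ∃ c : ht.toFinset, x ∈ ball (c : X) (γ / 2) := by
    intro x
    have := hcov (mem_univ x)
    simp only [mem_iUnion] at this
    obtain ⟨c, hc, hx⟩ := this
    exact ⟨⟨c, by simpa using hc⟩, hx⟩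
  choose c hc using hc
  refine ⟨Fintype.card (Fin n → ht.toFinset), ?_⟩
  rintro m ⟨S, -, hS, rfl⟩
  rw [← Finset.card_univ]
  refine Finset.card_le_card_of_injOn (fun x i => c (f^[i] x)) (fun _ _ => Finset.mem_coe.2
    (Finset.mem_univ _)) ?_
  intro y hy z hz hyz
  by_contra hne
  obtain ⟨i, hi, hd⟩ := hS hy hz hne
  have h1 := hc (f^[i] y)
  have h2 := hc (f^[i] z)
  have h3 : c (f^[i] y) = c (f^[i] z) := congrFun hyz ⟨i, hi⟩
  rw [h3] at h1
  rw [mem_ball] at h1 h2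
  have := dist_triangle_right (f^[i] y) (f^[i] z) (c (f^[i] z) : X)
  linarith

lemma log_mono_nat {m n : ℕ} (h : m ≤ n) :
    ENNReal.ofReal (Real.log m) ≤ ENNReal.ofReal (Real.log n) := by
  rcases Nat.eq_zero_or_pos m with h0 | h0
  · simp [h0]
  · exact ENNReal.ofReal_le_ofReal (Real.log_le_log (by exact_mod_cast h0) (by exact_mod_cast h))

open Classical in
lemma main_bound {ν : Measure X} [IsProbabilityMeasure ν] {f : X → X}
    (hf : MeasurePreserving f ν ν) {Ω S : Set X} (hΩ : ∀ᵐ x ∂ν, x ∈ Ω) (hS : ∀ᵐ x ∂ν, x ∈ S)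
    {η : X → ℝ} {a b : X → ℕ} (ha : Measurable a) (hb : Measurable b)
    (hbS : ∀ u ∈ S, ∀ v ∈ S, b u = b v → dist u v ≤ η u)
    {K : Set X} (hK : MeasurableSet K) {N : ℕ} (hN : 1 ≤ N) (haK : ∀ x ∈ K, a x < N)
    {γ : ℝ} (hγ : 0 < γ) (hsep : ∀ x ∈ K, ∀ y ∈ K, a x ≠ a y → γ < dist x y)
    (Λ : Set X) (n : ℕ) :
    Hrv ν (itin f a n) ≤ Hrv ν (itin f b n) + n * Hrv ν (fun x => if x ∈ K then 0 else a x + 1)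
      + ENNReal.ofReal (Real.log 2)
      + ∫⁻ x in Λ, ENNReal.ofReal (Real.log (sepCount f Ω η n γ Λ x)) ∂ν
      + n * ENNReal.ofReal (Real.log N) * ν (toMeasurable ν Λ)ᶜ := by
  set T : X → ℕ := fun x => if x ∈ K then 0 else a x + 1 with hT
  have hTm : Measurable T := Measurable.ite hK measurable_const (ha.add_const 1)
  set M := toMeasurable ν Λ with hM
  have hMm : MeasurableSet M := measurableSet_toMeasurable _ _
  set L : X → Bool := fun x => decide (x ∈ M) with hL
  have hLm : Measurable L := by
    refine measurable_to_bool ?_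
    convert hMm using 1
    ext x; simp [hL]
  have hia := measurable_itin hf.measurable ha n
  have hib := measurable_itin hf.measurable hb n
  have hiT := measurable_itin hf.measurable hTm n
  set Z : X → ((Fin n → ℕ) × (Fin n → ℕ)) × Bool :=
    fun x => ((itin f b n x, itin f T n x), L x) with hZ
  have hZm : Measurable Z := (hib.prodMk hiT).prodMk hLm
  set J : ((Fin n → ℕ) × (Fin n → ℕ)) × Bool → Set (Fin n → ℕ) :=
    fun i => {j | ν (Z ⁻¹' {i} ∩ itin f a n ⁻¹' {j}) ≠ 0} with hJ
  have hsub : ∀ i, J i ⊆ ↑(Fintype.piFinset fun k : Fin n =>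
      if i.1.2 k = 0 then Finset.range N else {i.1.2 k - 1}) := by
    intro i j hj
    obtain ⟨x, hx1, hx2⟩ := nonempty_of_measure_ne_zero hj
    simp only [mem_preimage, mem_singleton_iff] at hx1 hx2
    rw [Finset.mem_coe, Fintype.mem_piFinset]
    intro k
    have h1 : i.1.2 k = T (f^[k] x) := by rw [← hx1]; rfl
    have h2 : j k = a (f^[k] x) := by rw [← hx2]; rfl
    rw [h1, h2]
    by_cases hk : f^[k] x ∈ K
    · simp [hT, hk, haK _ hk]
    · simp [hT, hk]
  have hfin : ∀ i, (J i).Finite := fun i => (Finset.finite_toSet _).subset (hsub i)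
  have hcard : ∀ i, (J i).ncard ≤ N ^ n := by
    intro i
    refine (Set.ncard_le_ncard (hsub i) (Finset.finite_toSet _)).trans ?_
    rw [Set.ncard_coe_finset, Fintype.card_piFinset]
    calc _ ≤ ∏ _k : Fin n, N := by
          refine Finset.prod_le_prod' fun k _ => ?_
          split_ifs
          · simp
          · simpa using hN
      _ = N ^ n := by simp
  have h1 : Hrv ν (itin f a n) ≤ Hrv ν (fun x => (Z x, itin f a n x)) :=
    Hrv_comp_le (ν := ν) (hZm.prodMk hia) Prod.snd
  have h2 := Hrv_pair_le_count (ν := ν) hZm hia hfin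
  have h3 : Hrv ν Z ≤ Hrv ν (itin f b n) + n * Hrv ν T + ENNReal.ofReal (Real.log 2) := by
    refine (Hrv_pair_le (ν := ν) (hib.prodMk hiT) hLm).trans ?_
    refine add_le_add ((Hrv_pair_le (ν := ν) hib hiT).trans ?_) (Hrv_bool_le hLm)
    gcongr
    exact Hrv_itin_le hf hTm n
  have hgood : ∀ᵐ x ∂ν, x ∈ Ω ∧ ∀ k, f^[k] x ∈ S := by
    filter_upwards [hΩ, ae_iterate hf hS] with x h h' using ⟨h, h'⟩
  have h4 : ∫⁻ x, ENNReal.ofReal (Real.log ((J (Z x)).ncard : ℝ)) ∂ν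
      ≤ ∫⁻ x in Λ, ENNReal.ofReal (Real.log (sepCount f Ω η n γ Λ x)) ∂ν
      + n * ENNReal.ofReal (Real.log N) * ν Mᶜ := by
    rw [← lintegral_add_compl _ hMm]
    refine add_le_add ?_ ?_
    · rw [← Measure.restrict_toMeasurable (measure_ne_top ν Λ)]
      refine lintegral_mono_ae ?_
      filter_upwards [ae_restrict_mem hMm, ae_restrict_of_ae hgood] with x hxM hxg
      refine log_mono_nat ?_
      have hpt : ∀ j ∈ J (Z x), ∃ y ∈ Λ, Z y = Z x ∧ itin f a n y = j ∧
          y ∈ Ω ∧ ∀ k, f^[k] y ∈ S := by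
        intro j hj
        have hset : MeasurableSet (Z ⁻¹' {Z x} ∩ itin f a n ⁻¹' {j}) :=
          (hZm (measurableSet_singleton _)).inter (hia (measurableSet_singleton _))
        have hsubM : Z ⁻¹' {Z x} ∩ itin f a n ⁻¹' {j} ⊆ M := by
          rintro y ⟨hy, -⟩
          have : L y = L x := congrArg Prod.snd hy
          simpa [hL, hxM] using this
        have hne : ν (Λ ∩ (Z ⁻¹' {Z x} ∩ itin f a n ⁻¹' {j})) ≠ 0 := by
          rw [← Measure.measure_toMeasurable_inter hset (measure_ne_top ν Λ),
            inter_eq_self_of_subset_right hsubM]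
          exact hj
        obtain ⟨y, hy, hyg⟩ := (frequently_ae_mem_iff.2 hne).and_eventually hgood |>.exists
        exact ⟨y, hy.1, hy.2.1, hy.2.2, hyg⟩
      have : Nonempty X := ⟨x⟩
      choose! Y hYΛ hYZ hYa hYΩ hYS using hpt
      refine le_csSup (sep_bdd f n hγ _) ⟨(hfin (Z x)).toFinset.image Y, ?_, ?_, ?_⟩
      · intro y hy
        simp only [Finset.coe_image, Set.Finite.coe_toFinset, mem_image] at hy
        obtain ⟨j, hj, rfl⟩ := hy
        refine ⟨⟨hYΩ j hj, ?_⟩, hYΛ j hj⟩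
        intro i hi
        refine hbS _ (hxg.2 i) _ (hYS j hj i) ?_
        have := hYZ j hj
        have h5 : itin f b n (Y j) = itin f b n x := congrArg (fun p => p.1.1) this
        exact (congrFun h5 ⟨i, hi⟩).symm
      · intro y hy z hz hyz
        simp only [Finset.coe_image, Set.Finite.coe_toFinset, mem_image] at hy hz
        obtain ⟨j, hj, rfl⟩ := hy
        obtain ⟨l, hl, rfl⟩ := hz
        have hjl : j ≠ l := fun h => hyz (by rw [h])
        obtain ⟨i, hi⟩ := Function.ne_iff.1 hjl
        refine ⟨i, i.2, ?_⟩
        have h5 : itin f T n (Y j) = itin f T n (Y l) :=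
          (congrArg (fun p => p.1.2) ((hYZ j hj).trans (hYZ l hl).symm))
        have h6 : T (f^[i] (Y j)) = T (f^[i] (Y l)) := congrFun h5 i
        have h7 : a (f^[i] (Y j)) = j i := congrFun (hYa j hj) i
        have h8 : a (f^[i] (Y l)) = l i := congrFun (hYa l hl) i
        have h9 : a (f^[i] (Y j)) ≠ a (f^[i] (Y l)) := by rw [h7, h8]; exact hi
        by_cases hA : f^[i] (Y j) ∈ K <;> by_cases hB : f^[i] (Y l) ∈ K
        · exact hsep _ hA _ hB h9
        · simp [hT, hA, hB] at h6
        · simp [hT, hA, hB] at h6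
        · simp only [hT, hA, hB, if_false] at h6
          omega
      · rw [Finset.card_image_of_injOn, ← Set.ncard_eq_toFinset_card (J (Z x)) (hfin (Z x))]
        intro j hj l hl hjl
        have hj' : j ∈ J (Z x) := by simpa only [Set.Finite.coe_toFinset] using hj
        have hl' : l ∈ J (Z x) := by simpa only [Set.Finite.coe_toFinset] using hl
        rw [← hYa j hj', ← hYa l hl', hjl]
    · calc _ ≤ ∫⁻ x in Mᶜ, n * ENNReal.ofReal (Real.log N) ∂ν := by
            refine lintegral_mono fun x => ?_
            refine (log_mono_nat (hcard (Z x))).trans ?_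
            push_cast
            rw [Real.log_pow, ENNReal.ofReal_mul (by positivity), ENNReal.ofReal_natCast]
        _ = _ := by simp
  calc _ ≤ _ := h1.trans h2
    _ ≤ _ := add_le_add h3 h4
    _ = _ := by ring

lemma phi_le_of_add_eq_one {p s : ℝ≥0∞} (h : p + s = 1) :
    ENNReal.ofReal (Real.negMulLog p.toReal) ≤ s := by
  have hp : p ≤ 1 := h ▸ le_self_add
  have hs : s ≤ 1 := h ▸ le_add_self
  have hpt : p ≠ ⊤ := ne_top_of_le_ne_top ENNReal.one_ne_top hp
  have hst : s ≠ ⊤ := ne_top_of_le_ne_top ENNReal.one_ne_top hs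
  have h' : p.toReal + s.toReal = 1 := by
    rw [← ENNReal.toReal_add hpt hst, h]; simp
  refine ENNReal.ofReal_le_of_le_toReal ?_
  rcases (ENNReal.toReal_nonneg (a := p)).eq_or_lt with h0 | h0
  · rw [← h0]; simp
  · have := gibbs_real h0 one_pos
    simp at this
    rw [Real.negMulLog]
    linarith

lemma phi_small {ε : ℝ≥0∞} (hε : 0 < ε) :
    ∃ δ : ℝ≥0∞, 0 < δ ∧ ∀ p < δ, ENNReal.ofReal (Real.negMulLog p.toReal) < ε := by
  have h1 : Tendsto (fun p : ℝ≥0∞ => ENNReal.ofReal (Real.negMulLog p.toReal)) (𝓝 0) (𝓝 0) := by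
    have ht : Tendsto ENNReal.toReal (𝓝 0) (𝓝 0) := by
      simpa using ENNReal.tendsto_toReal (a := 0) ENNReal.zero_ne_top
    have h2 : Tendsto (fun p : ℝ≥0∞ => Real.negMulLog p.toReal) (𝓝 0) (𝓝 0) := by
      have := (Real.continuous_negMulLog.tendsto 0).comp ht
      simpa [Function.comp_def] using this
    simpa using ENNReal.tendsto_ofReal h2
  have h2 := h1.eventually (gt_mem_nhds hε)
  obtain ⟨δ, hδ, h⟩ := ENNReal.nhds_zero_basis.eventually_iff.1 h2
  exact ⟨δ, hδ, fun p hp => h hp⟩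

lemma tail_bound (F : ℝ≥0∞ → ℝ≥0∞) (g c d e : ℕ → ℝ≥0∞) (N : ℕ) (ε : ℝ≥0∞)
    (h1 : ∀ i < N, g i = c i) (h2 : ∀ i, g (i + N) = d (i + N)) (h3 : ∀ i, F (c i) ≤ e i)
    (h4 : ∑' i, e i ≤ ε) (h5 : ∑' i, F (d (i + N)) ≤ ε) : ∑' i, F (g i) ≤ 2 * ε := by
  rw [← Summable.sum_add_tsum_nat_add' (f := fun i => F (g i)) (k := N) ENNReal.summable, two_mul]
  refine add_le_add ?_ ?_
  · refine le_trans ?_ h4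
    refine le_trans (Finset.sum_le_sum fun i hi => ?_) (ENNReal.sum_le_tsum (Finset.range N))
    rw [h1 i (Finset.mem_range.1 hi)]; exact h3 i
  · simp_rw [h2]; exact h5

lemma exists_sep {N : ℕ} {C : ℕ → Set X} (hC : ∀ i, IsCompact (C i))
    (hd : ∀ i j, i ≠ j → Disjoint (C i) (C j)) :
    ∃ γ : ℝ, 0 < γ ∧ ∀ i < N, ∀ j < N, i ≠ j → ∀ x ∈ C i, ∀ y ∈ C j, γ < dist x y := by
  have key : ∀ i j, i ≠ j → ∀ᶠ γ : ℝ in 𝓝[>] 0, ∀ x ∈ C i, ∀ y ∈ C j, γ < dist x y := by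
    intro i j hij
    obtain ⟨δ, hδ, h⟩ := (hd i j hij).exists_thickenings (hC i) (hC j).isClosed
    have : ∀ᶠ γ : ℝ in 𝓝[>] 0, γ < δ :=
      (gt_mem_nhds hδ).filter_mono nhdsWithin_le_nhds
    filter_upwards [this] with γ hγ x hx y hy
    by_contra hle
    push Not at hle
    have hnot : y ∉ thickening δ (C i) := fun hh =>
      Set.disjoint_left.1 h hh (self_subset_thickening hδ _ hy)
    apply hnot
    rw [mem_thickening_iff]
    exact ⟨x, hx, by rw [dist_comm]; linarith⟩
  have h2 : ∀ᶠ γ : ℝ in 𝓝[>] 0, ∀ i ∈ Finset.range N, ∀ j ∈ Finset.range N, i ≠ j →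
      ∀ x ∈ C i, ∀ y ∈ C j, γ < dist x y := by
    rw [Filter.eventually_all_finset]
    intro i _
    rw [Filter.eventually_all_finset]
    intro j _
    by_cases hij : i = j
    · simp [hij]
    · filter_upwards [key i j hij] with γ h _ using h
  obtain ⟨γ, h, hpos⟩ := (h2.and self_mem_nhdsWithin).exists
  exact ⟨γ, hpos, fun i hi j hj => h i (Finset.mem_range.2 hi) j (Finset.mem_range.2 hj)⟩

open Classical in
lemma exists_compact_approx {ν : Measure X} [IsProbabilityMeasure ν] {Ω : Set X}
    (hΩ : ∀ᵐ x ∂ν, x ∈ Ω) {Q : ℕ → Set X} (hQ : IsCountablePartition Ω Q)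
    (hQH : partEntropy ν Q < ⊤) {a : X → ℕ} (ha : Measurable a)
    (ha1 : ∀ x i, x ∈ Q i → a x = i)
    (ha2 : ∀ x ∈ Ω, x ∈ Q (a x)) {ε : ℝ≥0∞} (hε : 0 < ε) :
    ∃ (K : Set X) (N : ℕ) (γ : ℝ), MeasurableSet K ∧ 1 ≤ N ∧ (∀ x ∈ K, a x < N) ∧ 0 < γ ∧
      (∀ x ∈ K, ∀ y ∈ K, a x ≠ a y → γ < dist x y) ∧
      Hrv ν (fun x => if x ∈ K then 0 else a x + 1) ≤ 4 * ε := by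
  obtain ⟨hm, hd, hU⟩ := hQ
  obtain ⟨e, he, hesum⟩ := ENNReal.exists_pos_sum_of_countable' hε.ne' ℕ
  have hC : ∀ i, ∃ C ⊆ Q i, IsCompact C ∧ ν (Q i \ C) ≤ e i ∧
      ENNReal.ofReal (Real.negMulLog (ν (Q i \ C)).toReal) ≤ e i := by
    intro i
    obtain ⟨δ, hδ, h⟩ := phi_small (he i)
    obtain ⟨C, hCQ, hCc, hlt⟩ := (hm i).exists_isCompact_sdiff_lt (μ := ν) (measure_ne_top _ _)
      (ε := min δ (e i)) (lt_min hδ (he i)).ne'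
    exact ⟨C, hCQ, hCc, (hlt.trans_le (min_le_right _ _)).le,
      (h _ (hlt.trans_le (min_le_left _ _))).le⟩
  choose C hCQ hCc hC1 hC2 using hC
  have hsum : ∑' i, ν (Q i) ≠ ⊤ := by
    rw [← measure_iUnion hd hm]; exact measure_ne_top _ _
  have t1 := (ENNReal.tendsto_sum_nat_add _ hsum).eventually (gt_mem_nhds hε)
  have t2 := (ENNReal.tendsto_sum_nat_add _ hQH.ne).eventually (gt_mem_nhds hε)
  obtain ⟨N, ⟨hN1, hN2⟩, hN⟩ := ((t1.and t2).and (eventually_ge_atTop 1)).exists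
  obtain ⟨γ, hγ, hγs⟩ := exists_sep (N := N) hCc
    (fun i j hij => (hd hij).mono (hCQ i) (hCQ j))
  set K : Set X := ⋃ i ∈ Finset.range N, C i with hKdef
  have hKmem : ∀ x, x ∈ K ↔ ∃ i < N, x ∈ C i := by intro x; simp [hKdef]
  have hKm : MeasurableSet K := Finset.measurableSet_biUnion _ fun i _ => (hCc i).measurableSet
  refine ⟨K, N, γ, hKm, hN, ?_, hγ, ?_, ?_⟩
  · intro x hx
    obtain ⟨i, hi, hx⟩ := (hKmem x).1 hx
    rw [ha1 x i (hCQ i hx)]; exact hi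
  · intro x hx y hy hxy
    obtain ⟨i, hi, hx⟩ := (hKmem x).1 hx
    obtain ⟨j, hj, hy⟩ := (hKmem y).1 hy
    rw [ha1 x i (hCQ i hx), ha1 y j (hCQ j hy)] at hxy
    exact hγs i hi j hj hxy x hx y hy
  set T : X → ℕ := fun x => if x ∈ K then 0 else a x + 1 with hT
  have hTm : Measurable T := Measurable.ite hKm measurable_const (ha.add_const 1)
  have hg1 : ∀ i < N, ν (T ⁻¹' {i + 1}) = ν (Q i \ C i) := by
    intro i hi
    apply measure_congr
    filter_upwards [hΩ] with x hx
    apply propext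
    change x ∈ T ⁻¹' {i + 1} ↔ x ∈ Q i \ C i
    simp only [mem_preimage, mem_singleton_iff, hT]
    constructor
    · intro h
      split_ifs at h with hk
      have hai : a x = i := by omega
      refine ⟨hai ▸ ha2 x hx, fun hxC => hk ((hKmem x).2 ⟨i, hi, hxC⟩)⟩
    · rintro ⟨hxQ, hxC⟩
      rw [if_neg, ha1 x i hxQ]
      intro hk
      obtain ⟨j, hj, hxj⟩ := (hKmem x).1 hk
      have : j = i := by rw [← ha1 x i hxQ, ← ha1 x j (hCQ j hxj)]
      exact hxC (this ▸ hxj)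
  have hg2 : ∀ i, ν (T ⁻¹' {i + N + 1}) = ν (Q (i + N)) := by
    intro i
    apply measure_congr
    filter_upwards [hΩ] with x hx
    apply propext
    change x ∈ T ⁻¹' {i + N + 1} ↔ x ∈ Q (i + N)
    simp only [mem_preimage, mem_singleton_iff, hT]
    constructor
    · intro h
      split_ifs at h with hk
      have hai : a x = i + N := by omega
      exact hai ▸ ha2 x hx
    · intro hxQ
      rw [if_neg, ha1 x _ hxQ]
      intro hk
      obtain ⟨j, hj, hxj⟩ := (hKmem x).1 hk
      have : j = i + N := by rw [← ha1 x _ hxQ, ← ha1 x j (hCQ j hxj)]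
      omega
  have b1 := tail_bound id (fun i => ν (T ⁻¹' {i + 1})) (fun i => ν (Q i \ C i))
    (fun i => ν (Q i)) e N ε hg1 hg2 hC1 hesum.le hN1.le
  have b2 := tail_bound (fun p => ENNReal.ofReal (Real.negMulLog p.toReal))
    (fun i => ν (T ⁻¹' {i + 1})) (fun i => ν (Q i \ C i))
    (fun i => ν (Q i)) e N ε hg1 hg2 hC2 hesum.le hN2.le
  have hone := tsum_fiber (ν := ν) hTm
  rw [tsum_eq_zero_add' ENNReal.summable] at hone
  have b3 := phi_le_of_add_eq_one hone
  unfold Hrv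
  rw [tsum_eq_zero_add' ENNReal.summable]
  calc _ ≤ 2 * ε + 2 * ε := add_le_add (b3.trans b1) b2
    _ = 4 * ε := by ring

end part2

/-- **Theorem (local entropy ŕ la Newhouse).** For every `ν ∈ 𝓜` with `∫ log η dν > -∞`
(encoded as integrability of `log ∘ η` together with `ν{η = 0} = 0`), one has
`h_ν(f) ≤ h_ν(f, 𝒫) + h_{ν,η,loc}(f)`, where `𝒫` is the Mané partition associated to `η`,
restricted to `Ω`. -/
theorem entropy_le_partition_entropy_add_local_entropy
    (k : ℕ) (f : X → X) (I : Set X) (hI : IsClosed I)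
    (hf : Measurable f) (hfc : ContinuousOn f Iᶜ)
    (η : X → ℝ) (hηc : Continuous η) (hη01 : ∀ x, η x ∈ Icc (0 : ℝ) 1)
    (hηI : ∀ x ∈ I, η x = 0)
    (P : ℕ → Set X) (hP : IsManePartition k η P)
    (ν : Measure X) (hν : MemM f I ν)
    (hint : Integrable (fun x => Real.log (η x)) ν)
    (hzero : ν {x | η x = 0} = 0) :
    metricEntropy f (dynOmega f I) ν
      ≤ dynEntropy f ν (fun i => P i ∩ dynOmega f I)
        + locEntropy f (dynOmega f I) η ν := by
  classical
  obtain ⟨hprob, hνI, hmap⟩ := hν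
  have hpres : MeasurePreserving f ν ν := ⟨hf, hmap⟩
  set Ω := dynOmega f I with hΩdef
  have hΩ : ∀ᵐ x ∂ν, x ∈ Ω := by
    have h0 : ∀ᵐ x ∂ν, x ∈ Iᶜ := measure_eq_zero_iff_ae_notMem.1 hνI
    exact ae_iterate hpres h0
  have hΩm : MeasurableSet Ω := by
    have : Ω = ⋂ n, (f^[n]) ⁻¹' Iᶜ := by ext x; simp [hΩdef, dynOmega]
    rw [this]
    exact MeasurableSet.iInter fun n => (hf.iterate n) hI.measurableSet.compl
  set S : Set X := {x | η x ≠ 0} ∩ Ω with hSdef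
  have hS : ∀ᵐ x ∂ν, x ∈ S := by
    have h0 : ∀ᵐ x ∂ν, x ∉ {x | η x = 0} := measure_eq_zero_iff_ae_notMem.1 hzero
    filter_upwards [h0, hΩ] with x h h' using ⟨h, h'⟩
  obtain ⟨⟨hPm, hPd, hPU⟩, hPdiam, -⟩ := hP
  have hPΩ : IsCountablePartition S (fun i => P i ∩ Ω) := by
    refine ⟨fun i => (hPm i).inter hΩm, fun i j hij => (hPd hij).mono inter_subset_left
      inter_subset_left, ?_⟩
    rw [← iUnion_inter, hPU]
  obtain ⟨b, hb, hb1, hb2⟩ := exists_label hPΩ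
  have hbS : ∀ u ∈ S, ∀ v ∈ S, b u = b v → dist u v ≤ η u := by
    intro u hu v hv huv
    have h1 := (hb2 u hu).1
    have h2 := (hb2 v hv).1
    rw [← huv] at h2
    obtain ⟨n, hn, hdn⟩ := hPdiam (b u) ⟨u, h1⟩
    have h3 := Metric.dist_le_diam_of_mem (isCompact_univ.isBounded.subset (subset_univ _)) h1 h2
    exact h3.trans (hdn.le.trans (hn h1).1.le)
  have hPe := fun n => partEntropy_eq hpres hS hb1 hb2 n
  unfold metricEntropy
  refine iSup_le ?_
  rintro ⟨Q, hQ, hQH⟩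
  change dynEntropy f ν Q ≤ _
  obtain ⟨a, ha, ha1, ha2⟩ := exists_label hQ
  have hQe := fun n => partEntropy_eq hpres hΩ ha1 ha2 n
  refine ENNReal.le_of_forall_pos_le_add fun ε hε hfin => ?_
  obtain ⟨hdP, hloc⟩ := ENNReal.add_lt_top.1 hfin
  set D := dynEntropy f ν (fun i => P i ∩ Ω) with hD
  set l := locEntropy f Ω η ν with hl
  obtain ⟨δ, hδ, hδε⟩ : ∃ δ : ℝ≥0∞, 0 < δ ∧ 8 * δ = ε := by
    refine ⟨ε / 8, ENNReal.div_pos (by exact_mod_cast hε.ne') (by simp), ?_⟩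
    exact ENNReal.mul_div_cancel (by simp) (by simp)
  have hδt : δ ≠ ⊤ := by
    rintro rfl
    rw [ENNReal.mul_top (by simp)] at hδε
    exact ENNReal.coe_ne_top hδε.symm
  obtain ⟨K, N, γ, hK, hN, haK, hγ, hsep, hTH⟩ :=
    exists_compact_approx hΩ hQ hQH ha ha1 ha2 hδ
  obtain ⟨q, hq⟩ : ∃ q : ℕ, Hrv ν (itin f b (q + 1)) / (q + 1) ≤ D + δ := by
    have : D < D + δ := ENNReal.lt_add_right hdP.ne hδ.ne'
    conv_lhs at this => rw [hD]; unfold dynEntropy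
    obtain ⟨q, hq⟩ := iInf_lt_iff.1 this
    rw [hPe] at hq
    exact ⟨q, hq.le⟩
  obtain ⟨σ, hσ, hσN⟩ : ∃ σ ∈ Ioo (0 : ℝ) 1,
      ENNReal.ofReal (Real.log N) * ENNReal.ofReal (1 - σ) < δ := by
    have ht : Tendsto (fun σ : ℝ => ENNReal.ofReal (Real.log N) * ENNReal.ofReal (1 - σ))
        (𝓝[<] 1) (𝓝 0) := by
      have h1 : Tendsto (fun σ : ℝ => ENNReal.ofReal (1 - σ)) (𝓝 1) (𝓝 0) := by
        have := ENNReal.tendsto_ofReal ((continuous_const.sub continuous_id).tendsto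
          (1 : ℝ) : Tendsto (fun σ : ℝ => 1 - σ) (𝓝 1) _)
        simpa using this
      have := ENNReal.Tendsto.const_mul (a := ENNReal.ofReal (Real.log N)) h1
        (Or.inr ENNReal.ofReal_ne_top)
      simpa using this.mono_left nhdsWithin_le_nhds
    have h2 := ht.eventually (gt_mem_nhds hδ)
    have h3 : ∀ᶠ σ : ℝ in 𝓝[<] 1, σ ∈ Ioo (0 : ℝ) 1 := Ioo_mem_nhdsLT one_pos
    obtain ⟨σ, h, h'⟩ := (h2.and h3).exists
    exact ⟨σ, h', h⟩
  have hlt : l < l + δ := ENNReal.lt_add_right hloc.ne hδ.ne'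
  obtain ⟨⟨Λ, hΛσ⟩, hΛ⟩ := iInf_lt_iff.1 ((le_iSup (fun σ : Ioo (0 : ℝ) 1 =>
    ⨅ Λ : {Λ : Set X // ENNReal.ofReal σ.1 ≤ ν Λ}, ⨆ γ : Ioi (0 : ℝ),
      Filter.limsup (fun n : ℕ => (∫⁻ x in (Λ : Set X),
            ENNReal.ofReal (Real.log (sepCount f Ω η n γ.1 Λ x)) ∂ν) / n) atTop)
    ⟨σ, hσ⟩).trans_lt hlt)
  have hev := eventually_lt_of_limsup_lt ((le_iSup (fun γ : Ioi (0 : ℝ) =>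
      Filter.limsup (fun n : ℕ => (∫⁻ x in Λ,
            ENNReal.ofReal (Real.log (sepCount f Ω η n γ.1 Λ x)) ∂ν) / n) atTop)
      ⟨γ, hγ⟩).trans_lt hΛ)
  have hlog2 : ∀ᶠ n : ℕ in atTop, ENNReal.ofReal (Real.log 2) / n < δ := by
    have ht : Tendsto (fun n : ℕ => ENNReal.ofReal (Real.log 2) / n) atTop (𝓝 0) := by
      have := ENNReal.Tendsto.const_mul (a := ENNReal.ofReal (Real.log 2))
        ENNReal.tendsto_inv_nat_nhds_zero (Or.inr ENNReal.ofReal_ne_top)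
      simpa [div_eq_mul_inv] using this
    exact ht.eventually (gt_mem_nhds hδ)
  obtain ⟨n₀, hn₀⟩ := eventually_atTop.1 (hev.and hlog2)
  set m := n₀ + 1 with hm
  set n := m * (q + 1) with hn
  have hnn : n₀ ≤ n := by
    have : m * 1 ≤ m * (q + 1) := Nat.mul_le_mul_left _ (by omega)
    omega
  obtain ⟨hA, hB⟩ := hn₀ n hnn
  have hnpos : 0 < n := Nat.mul_pos (by omega) (by omega)
  have hn0 : (n : ℝ≥0∞) ≠ 0 := by exact_mod_cast hnpos.ne'
  have hnt : (n : ℝ≥0∞) ≠ ⊤ := ENNReal.natCast_ne_top n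
  have hmain := main_bound hpres hΩ hS ha hb hbS hK hN haK hγ hsep Λ n
  have hcompl : ν (toMeasurable ν Λ)ᶜ ≤ ENNReal.ofReal (1 - σ) := by
    rw [prob_compl_eq_one_sub (measurableSet_toMeasurable _ _), measure_toMeasurable,
      ENNReal.ofReal_sub _ hσ.1.le, ENNReal.ofReal_one]
    exact tsub_le_tsub_left hΛσ _
  have hqn : Hrv ν (itin f b n) / n ≤ D + δ := by
    refine le_trans ?_ hq
    refine (ENNReal.div_le_div_right (Hrv_itin_mul hpres hb m (q + 1)) _).trans ?_
    rw [hn]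
    push_cast
    rw [ENNReal.mul_div_mul_left _ _ (by simp [hm]) (by simp [hm])]
  have hle : dynEntropy f ν Q ≤ Hrv ν (itin f a n) / n := by
    refine (iInf_le _ (n - 1)).trans ?_
    have h1 : n - 1 + 1 = n := by omega
    have h2 : (((n - 1 : ℕ) : ℝ≥0∞) + 1) = n := by exact_mod_cast h1
    rw [h1, h2, hQe]
  calc dynEntropy f ν Q ≤ Hrv ν (itin f a n) / n := hle
    _ ≤ _ := ENNReal.div_le_div_right hmain _
    _ = Hrv ν (itin f b n) / n + Hrv ν (fun x => if x ∈ K then 0 else a x + 1)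
        + ENNReal.ofReal (Real.log 2) / n
        + (∫⁻ x in Λ, ENNReal.ofReal (Real.log (sepCount f Ω η n γ Λ x)) ∂ν) / n
        + ENNReal.ofReal (Real.log N) * ν (toMeasurable ν Λ)ᶜ := by
      rw [ENNReal.add_div, ENNReal.add_div, ENNReal.add_div, ENNReal.add_div, mul_assoc,
        mul_comm (n : ℝ≥0∞), mul_comm (n : ℝ≥0∞), ENNReal.mul_div_cancel_right hn0 hnt,
        ENNReal.mul_div_cancel_right hn0 hnt]
    _ ≤ (D + δ) + 4 * δ + δ + (l + δ) + δ := by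
      refine add_le_add (add_le_add (add_le_add (add_le_add hqn hTH) hB.le) hA.le) ?_
      exact (mul_le_mul_right hcompl _).trans hσN.le
    _ = D + l + 8 * δ := by ring
    _ = D + l + ε := by rw [hδε]
end
end
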